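/- arXiv:1206.5159 — 2 statements merged into one kernel-verified Lean document; each statement's English description precedes it below -/
import Mathlib

section
/- For every integer k ≥ 1, there exists a simple graph G' that has a proper representation in which every vertex is represented by an axis-parallel curve with at most k bends, but G' has no representation (proper or not) in which every vertex is represented by an axis-parallel curve with at most k−1 bends. -/
/-!
The proof counts traces. Fix a set of `m` curves, called rulers, and record for every other curve
the set of rulers it meets, its trace.

A curve with at most `k - 1` bends has `k` segments, so it is given by `k + 2` real parameters: the
two coordinates of its starting point and one new coordinate per segment. If the rulers have at
most `k - 1` bends too, whether the curve meets a ruler depends only on how these parameters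
compare with the `O(m)` coordinates of the vertices of the rulers, whence there are at most
`O(m ^ (k + 2))` traces (`trace_bound`).

A curve with `k` bends has `k + 3` parameters, and these can be read off independently: for a
staircase with vertices `(c 0, c 1), (c 2, c 1), (c 2, c 3), (c 4, c 3), …`, each parameter `c i`
is an end of one of the segments, and short straight rulers placed across that segment near its
end detect `c i` (`stair_inter_rulerOf`). With `M` rulers per parameter, `M ^ (k + 3)`
staircases have pairwise different traces on `(k + 3) * M` rulers. For large `M` the
intersection graph of all these rulers and staircases therefore has no representation with at most
`k - 1` bends per curve.

The representation is made proper by shifting each curve by its own number in `[0, 1)`, all other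
data being integers: then no two curves share a coordinate, so they meet only where a
vertical segment of one crosses a horizontal segment of the other in an interior point
(`isProperRep_of_hasCoords`).
-/

open Set Metric

/-- A point of the plane. -/
abbrev Pt : Type := ℝ × ℝ

/-- The trace (image) of a curve parametrized over `[0,1]`. -/
def Im (γ : ℝ → Pt) : Set Pt := γ '' Icc 0 1

/-- `γ` is affine on the interval `[s,t]`. -/
def AffOn (γ : ℝ → Pt) (s t : ℝ) : Prop :=
  ∃ a d : Pt, ∀ x ∈ Icc s t, γ x = (a.1 + x * d.1, a.2 + x * d.2)

/-- `γ` is affine on `[s,t]` with a horizontal or vertical direction. -/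
def AxisAffOn (γ : ℝ → Pt) (s t : ℝ) : Prop :=
  ∃ a d : Pt, (d.1 = 0 ∨ d.2 = 0) ∧ ∀ x ∈ Icc s t, γ x = (a.1 + x * d.1, a.2 + x * d.2)

/-- `γ` restricted to `[0,1]` is a simple piecewise linear curve consisting of at most
`n` straight segments. -/
def IsPLCurveN (n : ℕ) (γ : ℝ → Pt) : Prop :=
  InjOn γ (Icc 0 1) ∧
    ∃ t : Fin (n + 1) → ℝ, t 0 = 0 ∧ t (Fin.last n) = 1 ∧ Monotone t ∧
      ∀ i : Fin n, AffOn γ (t i.castSucc) (t i.succ)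

/-- `γ` is a simple piecewise linear curve (finitely many segments). -/
def IsPLCurve (γ : ℝ → Pt) : Prop := ∃ n, IsPLCurveN n γ

/-- `γ` restricted to `[0,1]` is a simple rectilinear (axis-parallel) curve consisting of
at most `n` horizontal or vertical straight segments. -/
def IsRectCurveN (n : ℕ) (γ : ℝ → Pt) : Prop :=
  InjOn γ (Icc 0 1) ∧
    ∃ t : Fin (n + 1) → ℝ, t 0 = 0 ∧ t (Fin.last n) = 1 ∧ Monotone t ∧
      ∀ i : Fin n, AxisAffOn γ (t i.castSucc) (t i.succ)

/-- `γ` is a simple rectilinear (axis-parallel) piecewise linear curve. -/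
def IsRectCurve (γ : ℝ → Pt) : Prop := ∃ n, IsRectCurveN n γ

/-- A `k`-bend axis-parallel curve: a simple curve that is a concatenation of at most
`k+1` horizontal or vertical straight segments (hence has at most `k` bends). -/
def IsKBendCurve (k : ℕ) (γ : ℝ → Pt) : Prop := IsRectCurveN (k + 1) γ

/-- `R` is an intersection representation of `G` by curves:
two distinct vertices are adjacent iff their curves meet. -/
def Represents {V : Type*} (G : SimpleGraph V) (R : V → ℝ → Pt) : Prop :=
  ∀ u v : V, u ≠ v → ((Im (R u) ∩ Im (R v)).Nonempty ↔ G.Adj u v)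

/-- The set of intersection points of a representation: points lying on (at least)
two distinct curves. -/
def InPts {V : Type*} (R : V → ℝ → Pt) : Set Pt :=
  {p | ∃ u v : V, u ≠ v ∧ p ∈ Im (R u) ∧ p ∈ Im (R v)}

/-- The set `B` crosses (transversally, from one side to the other) the set `A` at `p`:
in every small ball around `p` there are points of `B` off `A` that cannot be joined by a
connected subset of the ball avoiding `A`. -/
def CrossesAt (A B : Set Pt) (p : Pt) : Prop :=
  ∃ ε₀ > (0:ℝ), ∀ ε : ℝ, 0 < ε → ε ≤ ε₀ →
    ∃ x y : Pt, x ∈ (B ∩ ball p ε) \ A ∧ y ∈ (B ∩ ball p ε) \ A ∧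
      ∀ C : Set Pt, C ⊆ ball p ε \ A → IsConnected C → ¬(x ∈ C ∧ y ∈ C)

/-- A proper representation: finitely many intersection points (in particular no two
curves overlap), every intersection point lies on exactly two curves which cross
(do not touch) there, and no endpoint of a curve lies on another curve. -/
def IsProperRep {V : Type*} (R : V → ℝ → Pt) : Prop :=
  (InPts R).Finite ∧
    (∀ p : Pt, ∀ u v w : V, u ≠ v → u ≠ w → v ≠ w →
      ¬(p ∈ Im (R u) ∧ p ∈ Im (R v) ∧ p ∈ Im (R w))) ∧
    (∀ u v : V, u ≠ v → R u 0 ∉ Im (R v) ∧ R u 1 ∉ Im (R v)) ∧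
    (∀ u v : V, u ≠ v → ∀ p ∈ Im (R u) ∩ Im (R v),
      CrossesAt (Im (R u)) (Im (R v)) p ∧ CrossesAt (Im (R v)) (Im (R u)) p)

/-- Membership in the class `B_k`-VPG. -/
def InBkVPG (k : ℕ) {V : Type*} (G : SimpleGraph V) : Prop :=
  ∃ R : V → ℝ → Pt, (∀ v, IsKBendCurve k (R v)) ∧ Represents G R

/-- Membership in the class SEG of intersection graphs of straight line segments. -/
def InSEG {V : Type*} (G : SimpleGraph V) : Prop :=
  ∃ S : V → Pt × Pt, (∀ v, (S v).1 ≠ (S v).2) ∧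
    ∀ u v : V, u ≠ v →
      ((segment ℝ (S u).1 (S u).2 ∩ segment ℝ (S v).1 (S v).2).Nonempty ↔ G.Adj u v)

/-- Membership in the class 3-DIR: intersection graphs of straight line segments using
at most three distinct directions (slopes). -/
def In3DIR {V : Type*} (G : SimpleGraph V) : Prop :=
  ∃ D : Fin 3 → Pt, ∃ S : V → Pt × Pt,
    (∀ v, (S v).1 ≠ (S v).2) ∧
    (∀ v, ∃ i : Fin 3, ∃ c : ℝ, (S v).2 - (S v).1 = c • D i) ∧
    ∀ u v : V, u ≠ v →
      ((segment ℝ (S u).1 (S u).2 ∩ segment ℝ (S v).1 (S v).2).Nonempty ↔ G.Adj u v)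

/-- `L` is a (straight) line in the plane. -/
def IsLine (L : Set Pt) : Prop :=
  ∃ p d : Pt, d ≠ 0 ∧ L = {x : Pt | ∃ r : ℝ, x = (p.1 + r * d.1, p.2 + r * d.2)}

/-- `z` is a bend point of the set `S` (trace of a curve): `S` is not locally straight
at `z`, i.e. no neighbourhood of `z` in `S` is contained in a line. -/
def IsBendPt (S : Set Pt) (z : Pt) : Prop :=
  z ∈ S ∧ ∀ ε > (0:ℝ), ¬ ∃ L : Set Pt, IsLine L ∧ S ∩ ball z ε ⊆ L

/-! ### Upper bound: traces of curves with few segments -/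

/-- The points on the interval `[s, t]` of an axis-parallel affine piece form the box spanned by
its two ends; boxes make intersections a matter of comparing coordinates. -/
lemma AxisAffOn.image_eq {γ : ℝ → Pt} {s t : ℝ} (h : AxisAffOn γ s t) (hst : s ≤ t) :
    γ '' Icc s t = uIcc (γ s) (γ t) := by
  obtain ⟨a, d, hd, hγ⟩ := h
  have hs := hγ s ⟨le_rfl, hst⟩
  have ht := hγ t ⟨hst, le_rfl⟩
  have hin : ∀ e f : ℝ, ∀ x ∈ Icc s t, e + x * f ∈ uIcc (e + s * f) (e + t * f) := by
    intro e f x hx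
    rw [mem_uIcc]
    rcases le_total 0 f with hf | hf
    · left; constructor <;> nlinarith [hx.1, hx.2]
    · right; constructor <;> nlinarith [hx.1, hx.2]
  have hout : ∀ e f : ℝ, uIcc (e + s * f) (e + t * f) ⊆ (fun x => e + x * f) '' Icc s t := by
    intro e f
    have := intermediate_value_uIcc (a := s) (b := t) (f := fun x : ℝ => e + x * f)
      (by fun_prop)
    rwa [uIcc_of_le hst] at this
  ext p
  rw [uIcc_prod_eq, hs, ht]
  constructor
  · rintro ⟨x, hx, rfl⟩
    rw [hγ x hx]
    exact ⟨hin _ _ x hx, hin _ _ x hx⟩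
  · rintro ⟨h1, h2⟩
    simp only at h1 h2
    rcases hd with hd | hd
    · obtain ⟨x, hx, hxe⟩ := hout _ _ h2
      refine ⟨x, hx, ?_⟩
      rw [hγ x hx]
      simp only [hd, mul_zero, add_zero, uIcc_self, mem_singleton_iff] at h1 ⊢
      exact Prod.ext h1.symm hxe
    · obtain ⟨x, hx, hxe⟩ := hout _ _ h1
      refine ⟨x, hx, ?_⟩
      rw [hγ x hx]
      simp only [hd, mul_zero, add_zero, uIcc_self, mem_singleton_iff] at h2 ⊢
      exact Prod.ext hxe h2.symm

/-- A rectilinear curve with `K` segments is a chain of boxes between consecutive vertices, each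
vertex sharing one coordinate (recorded by `b`) with the next. -/
lemma IsRectCurveN.exists_chain {K : ℕ} {γ : ℝ → Pt} (h : IsRectCurveN K γ) :
    ∃ (q : ℕ → Pt) (b : ℕ → Bool),
      (∀ j < K, (b j = true → (q (j + 1)).1 = (q j).1) ∧
        (b j = false → (q (j + 1)).2 = (q j).2)) ∧
      Im γ = {p | ∃ j < K, p ∈ uIcc (q j) (q (j + 1))} := by
  obtain ⟨-, t, h0, h1, hm, ha⟩ := h
  let T : ℕ → ℝ := fun j => t ⟨min j K, by omega⟩
  have hTm : Monotone T := fun i j hij => hm (by simp [Fin.le_def]; omega)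
  have hT0 : T 0 = 0 := by simp only [T]; rw [← h0]; congr 1
  have hTK : T K = 1 := by simp only [T]; rw [← h1]; congr 1; ext; simp
  have hA : ∀ j < K, AxisAffOn γ (T j) (T (j + 1)) := by
    intro j hj
    have e1 : T j = t (Fin.castSucc ⟨j, hj⟩) := congrArg t (Fin.ext (by simp; omega))
    have e2 : T (j + 1) = t (Fin.succ ⟨j, hj⟩) := congrArg t (Fin.ext (by simp; omega))
    rw [e1, e2]
    exact ha ⟨j, hj⟩
  have hK : 1 ≤ K := by
    by_contra hK
    have : K = 0 := by omega
    rw [this, hT0] at hTK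
    norm_num at hTK
  have hcover : ∀ n, 1 ≤ n → ∀ x, T 0 ≤ x → x ≤ T n → ∃ j < n, x ∈ Icc (T j) (T (j + 1)) := by
    intro n hn
    induction n, hn using Nat.le_induction with
    | base => intro x h0 h1; exact ⟨0, by omega, h0, h1⟩
    | succ n hn ih =>
      intro x h0 h1
      rcases le_total x (T n) with hx | hx
      · obtain ⟨j, hj, hxj⟩ := ih x h0 hx
        exact ⟨j, by omega, hxj⟩
      · exact ⟨n, by omega, hx, h1⟩
  have hdir : ∀ j < K, (γ (T (j + 1))).1 = (γ (T j)).1 ∨ (γ (T (j + 1))).2 = (γ (T j)).2 := by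
    intro j hj
    obtain ⟨a, d, hd, hγ⟩ := hA j hj
    have hle := hTm (Nat.le_succ j)
    rw [hγ _ ⟨hle, le_rfl⟩, hγ _ ⟨le_rfl, hle⟩]
    rcases hd with hd | hd <;> simp [hd]
  classical
  refine ⟨fun j => γ (T j), fun j => decide ((γ (T (j + 1))).1 = (γ (T j)).1), ?_, ?_⟩
  · intro j hj
    have := hdir j hj
    simp only [decide_eq_true_eq, decide_eq_false_iff_not]
    tauto
  · ext p
    constructor
    · rintro ⟨x, hx, rfl⟩
      obtain ⟨j, hj, hxj⟩ := hcover K hK x (by rw [hT0]; exact hx.1) (by rw [hTK]; exact hx.2)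
      refine ⟨j, hj, ?_⟩
      rw [← (hA j hj).image_eq (hTm (Nat.le_succ j))]
      exact ⟨x, hxj, rfl⟩
    · rintro ⟨j, hj, hp⟩
      rw [← (hA j hj).image_eq (hTm (Nat.le_succ j))] at hp
      obtain ⟨x, hx, rfl⟩ := hp
      refine ⟨x, ⟨?_, ?_⟩, rfl⟩
      · rw [← hT0]; exact (hTm (Nat.zero_le _)).trans hx.1
      · rw [← hTK]; exact hx.2.trans (hTm hj)

/-- `x` and `y` lie in the same cell (point or open interval) of the subdivision of the line
by `S`. -/
def SameCell (S : Finset ℝ) (x y : ℝ) : Prop :=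
  ∀ s ∈ S, (s < x ↔ s < y) ∧ (s ≤ x ↔ s ≤ y)

/-- The rank of the cell of `x` in the subdivision of the line by `S`; it takes at most
`2 * #S + 1` values. -/
noncomputable def cell (S : Finset ℝ) (x : ℝ) : ℕ :=
  (S.filter (· < x)).card + (S.filter (· ≤ x)).card

lemma cell_le (S : Finset ℝ) (x : ℝ) : cell S x ≤ 2 * S.card := by
  have h1 := S.card_filter_le (· < x)
  have h2 := S.card_filter_le (· ≤ x)
  unfold cell; omega

lemma sameCell_of_cell_eq {S : Finset ℝ} {x y : ℝ} (h : cell S x = cell S y) :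
    SameCell S x y := by
  wlog hxy : x ≤ y generalizing x y
  · intro s hs
    have := this h.symm (le_of_not_ge hxy) s hs
    exact ⟨this.1.symm, this.2.symm⟩
  have hs1 : S.filter (· < x) ⊆ S.filter (· < y) :=
    Finset.monotone_filter_right S (fun s _ hs => lt_of_lt_of_le hs hxy)
  have hs2 : S.filter (· ≤ x) ⊆ S.filter (· ≤ y) :=
    Finset.monotone_filter_right S (fun s _ hs => le_trans hs hxy)
  have hc1 := Finset.card_le_card hs1
  have hc2 := Finset.card_le_card hs2
  unfold cell at h
  have e1 := Finset.eq_of_subset_of_card_le hs1 (by omega)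
  have e2 := Finset.eq_of_subset_of_card_le hs2 (by omega)
  intro s hs
  have m1 := Finset.ext_iff.1 e1 s
  have m2 := Finset.ext_iff.1 e2 s
  simpa [hs] using And.intro m1 m2

lemma uIcc_inter_nonempty_iff (a b c d : ℝ) :
    (uIcc a b ∩ uIcc c d).Nonempty ↔
      (a ≤ c ∨ a ≤ d ∨ b ≤ c ∨ b ≤ d) ∧ (c ≤ a ∨ c ≤ b ∨ d ≤ a ∨ d ≤ b) := by
  rw [uIcc, uIcc, Icc_inter_Icc, nonempty_Icc]
  simp only [sup_le_iff, le_inf_iff, inf_le_iff, le_sup_iff]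
  have := le_total a b
  have := le_total c d
  grind

lemma SameCell.uIcc_inter {S : Finset ℝ} {a b a' b' c d : ℝ} (ha : SameCell S a a')
    (hb : SameCell S b b') (hc : c ∈ S) (hd : d ∈ S) :
    (uIcc a b ∩ uIcc c d).Nonempty ↔ (uIcc a' b' ∩ uIcc c d).Nonempty := by
  have hle : ∀ {x x' s : ℝ}, SameCell S x x' → s ∈ S → (x ≤ s ↔ x' ≤ s) := fun h hs => by
    rw [← not_lt, ← not_lt, (h _ hs).1]
  rw [uIcc_inter_nonempty_iff, uIcc_inter_nonempty_iff, hle ha hc, hle ha hd, hle hb hc, hle hb hd,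
    (ha c hc).2, (ha d hd).2, (hb c hc).2, (hb d hd).2]

lemma uIcc_pt_inter_nonempty_iff (a b c d : Pt) :
    (uIcc a b ∩ uIcc c d).Nonempty ↔
      (uIcc a.1 b.1 ∩ uIcc c.1 d.1).Nonempty ∧ (uIcc a.2 b.2 ∩ uIcc c.2 d.2).Nonempty := by
  rw [uIcc_prod_eq, uIcc_prod_eq, prod_inter_prod, prod_nonempty_iff]

/-- Curves with `K` segments have at most `O(m ^ (K + 2))` distinct traces on `m` given curves with
`K` segments: a chain of `K` boxes is described by the direction of each step, the cells of the
two coordinates of the first vertex, and the cell of one new coordinate per step. -/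
theorem trace_bound (K : ℕ) {ι α : Type*} [Fintype ι] [Fintype α] (ρ : ι → ℝ → Pt)
    (γ : α → ℝ → Pt) (hρ : ∀ i, IsRectCurveN K (ρ i)) (hγ : ∀ a, IsRectCurveN K (γ a))
    (hinj : ∀ a b, (∀ i, (Im (γ a) ∩ Im (ρ i)).Nonempty ↔ (Im (γ b) ∩ Im (ρ i)).Nonempty) →
      a = b) :
    Fintype.card α ≤ 2 ^ K * (4 * Fintype.card ι * (K + 1) + 1) ^ (K + 2) := by
  classical
  choose r _ _ hr using fun i => (hρ i).exists_chain
  choose q b hqb hq using fun a => (hγ a).exists_chain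
  -- all coordinates of vertices of the given curves
  let S : Finset ℝ := (Finset.univ : Finset (ι × Fin (K + 1) × Bool)).image
    fun x => if x.2.2 then (r x.1 x.2.1).1 else (r x.1 x.2.1).2
  have hS : S.card ≤ 2 * Fintype.card ι * (K + 1) := by
    refine Finset.card_image_le.trans ?_
    simp only [Finset.card_univ, Fintype.card_prod, Fintype.card_fin, Fintype.card_bool]
    apply le_of_eq; ring
  have hS1 : ∀ i, ∀ j ≤ K, (r i j).1 ∈ S := fun i j hj =>
    Finset.mem_image.2 ⟨(i, ⟨j, by omega⟩, true), Finset.mem_univ _, by simp⟩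
  have hS2 : ∀ i, ∀ j ≤ K, (r i j).2 ∈ S := fun i j hj =>
    Finset.mem_image.2 ⟨(i, ⟨j, by omega⟩, false), Finset.mem_univ _, by simp⟩
  let L := 4 * Fintype.card ι * (K + 1) + 1
  let cl : ℝ → Fin L := fun x => ⟨cell S x, by have := cell_le S x; simp only [L]; nlinarith⟩
  have hcl : ∀ x y, cl x = cl y → SameCell S x y := fun x y h =>
    sameCell_of_cell_eq (Fin.ext_iff.1 h)
  let code : α → (Fin K → Bool) × Fin L × Fin L × (Fin K → Fin L) := fun a =>
    (fun j => b a j, cl (q a 0).1, cl (q a 0).2,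
      fun j => if b a j then cl (q a (j + 1)).2 else cl (q a (j + 1)).1)
  have hcode : Function.Injective code := by
    intro a a' h
    simp only [code, Prod.mk.injEq] at h
    obtain ⟨hb, h1, h2, hstep⟩ := h
    have key : ∀ j ≤ K, cl (q a j).1 = cl (q a' j).1 ∧ cl (q a j).2 = cl (q a' j).2 := by
      intro j
      induction j with
      | zero => exact fun _ => ⟨h1, h2⟩
      | succ j ih =>
        intro hj
        obtain ⟨i1, i2⟩ := ih (by omega)
        have hbj : b a j = b a' j := congrFun hb ⟨j, by omega⟩
        have hs := congrFun hstep ⟨j, by omega⟩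
        simp only [← hbj] at hs
        have ha := hqb a j (by omega)
        have ha' := hqb a' j (by omega)
        cases hc : b a j with
        | true =>
          rw [ha.1 hc, ha'.1 (hbj ▸ hc)]
          simp only [hc, if_true] at hs
          exact ⟨i1, hs⟩
        | false =>
          rw [ha.2 hc, ha'.2 (hbj ▸ hc)]
          simp only [hc] at hs
          exact ⟨hs, i2⟩
    apply hinj
    intro i
    have expand : ∀ a, (Im (γ a) ∩ Im (ρ i)).Nonempty ↔ ∃ j < K, ∃ l < K,
        (uIcc (q a j) (q a (j + 1)) ∩ uIcc (r i l) (r i (l + 1))).Nonempty := by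
      intro a
      rw [hq, hr]
      constructor
      · rintro ⟨p, ⟨j, hj, hp⟩, l, hl, hp'⟩
        exact ⟨j, hj, l, hl, p, hp, hp'⟩
      · rintro ⟨j, hj, l, hl, p, hp, hp'⟩
        exact ⟨p, ⟨j, hj, hp⟩, l, hl, hp'⟩
    rw [expand, expand]
    refine exists_congr fun j => and_congr_right fun hj => exists_congr fun l =>
      and_congr_right fun hl => ?_
    obtain ⟨k1, k2⟩ := key j hj.le
    obtain ⟨k1', k2'⟩ := key (j + 1) hj
    rw [uIcc_pt_inter_nonempty_iff, uIcc_pt_inter_nonempty_iff]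
    exact and_congr
      ((hcl _ _ k1).uIcc_inter (hcl _ _ k1') (hS1 i l hl.le) (hS1 i (l + 1) hl))
      ((hcl _ _ k2).uIcc_inter (hcl _ _ k2') (hS2 i l hl.le) (hS2 i (l + 1) hl))
  have := Fintype.card_le_of_injective code hcode
  simp only [Fintype.card_prod, Fintype.card_fun, Fintype.card_bool, Fintype.card_fin] at this
  refine this.trans (le_of_eq ?_)
  simp only [L]; ring

/-! ### A sufficient condition for properness -/

/-- The point with coordinates `u, v`, in this order for even `j` and swapped for odd `j`. -/
def pt (j : ℕ) (u v : ℝ) : Pt := if Even j then (u, v) else (v, u)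

lemma pt_succ (j : ℕ) (u v : ℝ) : pt (j + 1) u v = pt j v u := by
  by_cases h : Even j <;> simp [pt, h, Nat.even_add_one]

/-- The trace of `γ` is made of axis-parallel segments whose ends and fixed coordinates all
belong to the finite set `S`, and so do the coordinates of the ends of `γ`. -/
def HasCoords (γ : ℝ → Pt) (S : Set ℝ) : Prop :=
  S.Finite ∧ ((γ 0).1 ∈ S ∧ (γ 0).2 ∈ S ∧ (γ 1).1 ∈ S ∧ (γ 1).2 ∈ S) ∧
    ∀ p ∈ Im γ, ∃ (j : ℕ) (lo hi x c : ℝ), lo ∈ S ∧ hi ∈ S ∧ c ∈ S ∧ x ∈ Icc lo hi ∧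
      p = pt j x c ∧ ∀ x' ∈ Icc lo hi, pt j x' c ∈ Im γ

lemma HasCoords.mem {γ : ℝ → Pt} {S : Set ℝ} (h : HasCoords γ S) {p : Pt} (hp : p ∈ Im γ) :
    p.1 ∈ S ∨ p.2 ∈ S := by
  obtain ⟨j, lo, hi, x, c, -, -, hc, -, rfl, -⟩ := h.2.2 p hp
  by_cases hj : Even j
  · right; simpa [pt, hj]
  · left; simpa [pt, hj]

lemma exists_Icc_of_not_mem {S : Set ℝ} {lo hi x : ℝ} (hlo : lo ∈ S) (hhi : hi ∈ S)
    (hx : x ∈ Icc lo hi) (hxS : x ∉ S) : ∃ ε > 0, ∀ y, |y - x| < ε → y ∈ Icc lo hi := by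
  have h1 : lo < x := lt_of_le_of_ne hx.1 (by rintro rfl; exact hxS hlo)
  have h2 : x < hi := lt_of_le_of_ne hx.2 (by rintro rfl; exact hxS hhi)
  refine ⟨min (x - lo) (hi - x), lt_min (by linarith) (by linarith), fun y hy => ?_⟩
  have a := abs_lt.1 (lt_of_lt_of_le hy (min_le_left _ _))
  have b := abs_lt.1 (lt_of_lt_of_le hy (min_le_right _ _))
  exact ⟨by linarith [a.1], by linarith [b.2]⟩

lemma HasCoords.horizontal {γ : ℝ → Pt} {S : Set ℝ} (h : HasCoords γ S) {p : Pt}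
    (hp : p ∈ Im γ) (h1 : p.1 ∉ S) : ∃ ε > 0, ∀ x, |x - p.1| < ε → (x, p.2) ∈ Im γ := by
  obtain ⟨j, lo, hi, x, c, hlo, hhi, hc, hx, rfl, hall⟩ := h.2.2 p hp
  by_cases hj : Even j
  · simp only [pt, hj, if_true] at h1 hall ⊢
    obtain ⟨ε, hε, hy⟩ := exists_Icc_of_not_mem hlo hhi hx h1
    exact ⟨ε, hε, fun y h => hall y (hy y h)⟩
  · simp [pt, hj, hc] at h1

lemma HasCoords.vertical {γ : ℝ → Pt} {S : Set ℝ} (h : HasCoords γ S) {p : Pt}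
    (hp : p ∈ Im γ) (h1 : p.2 ∉ S) : ∃ ε > 0, ∀ y, |y - p.2| < ε → (p.1, y) ∈ Im γ := by
  obtain ⟨j, lo, hi, x, c, hlo, hhi, hc, hx, rfl, hall⟩ := h.2.2 p hp
  by_cases hj : Even j
  · simp [pt, hj, hc] at h1
  · simp only [pt, hj, if_false] at h1 hall ⊢
    obtain ⟨ε, hε, hy⟩ := exists_Icc_of_not_mem hlo hhi hx h1
    exact ⟨ε, hε, fun y h => hall y (hy y h)⟩

lemma exists_punctured {S : Set ℝ} (hS : S.Finite) (x : ℝ) :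
    ∃ ε > 0, ∀ y, y ≠ x → |y - x| < ε → y ∉ S := by
  have : (S \ {x})ᶜ ∈ nhds x := (hS.subset sdiff_subset).isClosed.isOpen_compl.mem_nhds (by simp)
  obtain ⟨ε, hε, hb⟩ := Metric.mem_nhds_iff.1 this
  refine ⟨ε, hε, fun y hy hd hyS => ?_⟩
  exact hb (show y ∈ ball x ε by rwa [mem_ball, Real.dist_eq]) ⟨hyS, hy⟩

lemma crossesAt_of_vertical {A B : Set Pt} {p : Pt} {ε₁ ε₂ ε₃ : ℝ} (h₁ : 0 < ε₁) (h₂ : 0 < ε₂)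
    (h₃ : 0 < ε₃) (hA : ∀ y, |y - p.2| < ε₁ → (p.1, y) ∈ A)
    (hB : ∀ x, |x - p.1| < ε₂ → (x, p.2) ∈ B)
    (hAB : ∀ x, x ≠ p.1 → |x - p.1| < ε₃ → (x, p.2) ∉ A) : CrossesAt A B p := by
  refine ⟨min ε₁ (min ε₂ ε₃), by positivity, fun ε hε hle => ?_⟩
  obtain ⟨l1, l2, l3⟩ : ε ≤ ε₁ ∧ ε ≤ ε₂ ∧ ε ≤ ε₃ := by simpa using hle
  have good : ∀ s : ℝ, |s| = ε / 2 → (p.1 + s, p.2) ∈ (B ∩ ball p ε) \ A := by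
    intro s hs
    have h0 : s ≠ 0 := by rintro rfl; simp at hs; linarith
    have e : |p.1 + s - p.1| = ε / 2 := by rw [add_sub_cancel_left, hs]
    refine ⟨⟨hB _ (by rw [e]; linarith), ?_⟩, hAB _ (by simpa using h0) (by rw [e]; linarith)⟩
    rw [mem_ball, Prod.dist_eq]
    simp only [Real.dist_eq, sub_self, abs_zero, e]
    exact max_lt (by linarith) hε
  refine ⟨_, _, good (-(ε / 2)) (by rw [abs_neg, abs_of_pos (by linarith)]),
    good (ε / 2) (abs_of_pos (by linarith)), ?_⟩
  rintro C hC hconn ⟨hx, hy⟩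
  obtain ⟨z, hz, hze⟩ := hconn.isPreconnected.intermediate_value hx hy
    (f := Prod.fst) continuous_fst.continuousOn
    (show p.1 ∈ Icc (p.1 + -(ε / 2)) (p.1 + ε / 2) by constructor <;> linarith)
  obtain ⟨hzb, hzA⟩ := hC hz
  apply hzA
  rw [mem_ball, Prod.dist_eq] at hzb
  have := lt_of_le_of_lt (le_max_right _ _) hzb
  rw [Real.dist_eq] at this
  have h := hA z.2 (this.trans_le l1)
  rwa [← hze] at h

lemma crossesAt_of_horizontal {A B : Set Pt} {p : Pt} {ε₁ ε₂ ε₃ : ℝ} (h₁ : 0 < ε₁) (h₂ : 0 < ε₂)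
    (h₃ : 0 < ε₃) (hA : ∀ x, |x - p.1| < ε₁ → (x, p.2) ∈ A)
    (hB : ∀ y, |y - p.2| < ε₂ → (p.1, y) ∈ B)
    (hAB : ∀ y, y ≠ p.2 → |y - p.2| < ε₃ → (p.1, y) ∉ A) : CrossesAt A B p := by
  refine ⟨min ε₁ (min ε₂ ε₃), by positivity, fun ε hε hle => ?_⟩
  obtain ⟨l1, l2, l3⟩ : ε ≤ ε₁ ∧ ε ≤ ε₂ ∧ ε ≤ ε₃ := by simpa using hle
  have good : ∀ s : ℝ, |s| = ε / 2 → (p.1, p.2 + s) ∈ (B ∩ ball p ε) \ A := by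
    intro s hs
    have h0 : s ≠ 0 := by rintro rfl; simp at hs; linarith
    have e : |p.2 + s - p.2| = ε / 2 := by rw [add_sub_cancel_left, hs]
    refine ⟨⟨hB _ (by rw [e]; linarith), ?_⟩, hAB _ (by simpa using h0) (by rw [e]; linarith)⟩
    rw [mem_ball, Prod.dist_eq]
    simp only [Real.dist_eq, sub_self, abs_zero, e]
    exact max_lt hε (by linarith)
  refine ⟨_, _, good (-(ε / 2)) (by rw [abs_neg, abs_of_pos (by linarith)]),
    good (ε / 2) (abs_of_pos (by linarith)), ?_⟩
  rintro C hC hconn ⟨hx, hy⟩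
  obtain ⟨z, hz, hze⟩ := hconn.isPreconnected.intermediate_value hx hy
    (f := Prod.snd) continuous_snd.continuousOn
    (show p.2 ∈ Icc (p.2 + -(ε / 2)) (p.2 + ε / 2) by constructor <;> linarith)
  obtain ⟨hzb, hzA⟩ := hC hz
  apply hzA
  rw [mem_ball, Prod.dist_eq] at hzb
  have := lt_of_le_of_lt (le_max_left _ _) hzb
  rw [Real.dist_eq] at this
  have h := hA z.1 (this.trans_le l1)
  rwa [← hze] at h

/-- Two curves without common coordinates can only meet at a point interior to a vertical segment
of one and a horizontal segment of the other, where they cross. -/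
lemma HasCoords.crossesAt {γ δ : ℝ → Pt} {S T : Set ℝ} (hγ : HasCoords γ S) (hδ : HasCoords δ T)
    (hST : Disjoint S T) {p : Pt} (hp : p ∈ Im γ) (hp' : p ∈ Im δ) :
    CrossesAt (Im γ) (Im δ) p := by
  rw [disjoint_left] at hST
  rcases hγ.mem hp with h | h
  · have hT1 : p.1 ∉ T := hST h
    have hT2 : p.2 ∈ T := (hδ.mem hp').resolve_left hT1
    have hS2 : p.2 ∉ S := fun h => hST h hT2
    obtain ⟨ε₁, h1, hv⟩ := hγ.vertical hp hS2
    obtain ⟨ε₂, h2, hh⟩ := hδ.horizontal hp' hT1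
    obtain ⟨ε₃, h3, hpu⟩ := exists_punctured hγ.1 p.1
    refine crossesAt_of_vertical h1 h2 h3 hv hh fun x hx hd hm => ?_
    rcases hγ.mem hm with h | h
    · exact hpu x hx hd h
    · exact hS2 h
  · have hT2 : p.2 ∉ T := hST h
    have hT1 : p.1 ∈ T := (hδ.mem hp').resolve_right hT2
    have hS1 : p.1 ∉ S := fun h => hST h hT1
    obtain ⟨ε₁, h1, hv⟩ := hγ.horizontal hp hS1
    obtain ⟨ε₂, h2, hh⟩ := hδ.vertical hp' hT2
    obtain ⟨ε₃, h3, hpu⟩ := exists_punctured hγ.1 p.2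
    refine crossesAt_of_horizontal h1 h2 h3 hv hh fun x hx hd hm => ?_
    rcases hγ.mem hm with h | h
    · exact hS1 h
    · exact hpu x hx hd h

/-- A finite family of curves whose coordinate sets are pairwise disjoint is proper. -/
lemma isProperRep_of_hasCoords {V : Type*} [Finite V] {R : V → ℝ → Pt} {S : V → Set ℝ}
    (h : ∀ v, HasCoords (R v) (S v)) (hS : ∀ u v, u ≠ v → Disjoint (S u) (S v)) :
    IsProperRep R := by
  have hd : ∀ u v, u ≠ v → ∀ x, x ∈ S u → x ∉ S v := fun u v huv x hx =>
    disjoint_left.1 (hS u v huv) hx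
  refine ⟨?_, ?_, ?_, ?_⟩
  · have hfin : (⋃ v, S v).Finite := finite_iUnion fun v => (h v).1
    refine (hfin.prod hfin).subset ?_
    rintro p ⟨u, v, huv, hu, hv⟩
    have h1 := (h u).mem hu
    have h2 := (h v).mem hv
    have h3 := hd u v huv p.1
    have h4 := hd u v huv p.2
    simp only [mem_prod, mem_iUnion]
    grind
  · rintro p u v w huv huw hvw ⟨hu, hv, hw⟩
    have h1 := (h u).mem hu
    have h2 := (h v).mem hv
    have h3 := (h w).mem hw
    have := hd u v huv
    have := hd u w huw
    have := hd v w hvw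
    grind
  · intro u v huv
    obtain ⟨a, b, c, d⟩ := (h u).2.1
    have := hd u v huv
    constructor
    · intro hm
      rcases (h v).mem hm with h' | h'
      · exact this _ a h'
      · exact this _ b h'
    · intro hm
      rcases (h v).mem hm with h' | h'
      · exact this _ c h'
      · exact this _ d h'
  · rintro u v huv p ⟨hu, hv⟩
    exact ⟨(h u).crossesAt (h v) (hS u v huv) hu hv,
      (h v).crossesAt (h u) (hS u v huv).symm hv hu⟩

/-! ### Staircases and rulers -/

/-- The staircase with `k` bends and vertices `pt j (c j) (c (j + 1))` for `j ≤ k + 1`; its `j`-th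
segment is run through at constant speed on `[j / (k + 1), (j + 1) / (k + 1)]`. -/
noncomputable def stair (k : ℕ) (c : ℕ → ℝ) (t : ℝ) : Pt :=
  let j := min ⌊(k + 1) * t⌋₊ k
  pt j (c j + ((k + 1) * t - j) * (c (j + 2) - c j)) (c (j + 1))

lemma stair_eq {k : ℕ} {c : ℕ → ℝ} {t : ℝ} {j : ℕ} (hj : j ≤ k) (h1 : (j : ℝ) ≤ (k + 1) * t)
    (h2 : (k + 1) * t ≤ j + 1) :
    stair k c t = pt j (c j + ((k + 1) * t - j) * (c (j + 2) - c j)) (c (j + 1)) := by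
  rcases h2.lt_or_eq with h2 | h2
  · have : ⌊(k + 1) * t⌋₊ = j := by
      rw [Nat.floor_eq_iff (le_trans (by positivity) h1)]
      exact ⟨h1, h2⟩
    simp only [stair, this, min_eq_left hj]
  · have : ⌊(k + 1) * t⌋₊ = j + 1 := by rw [h2]; exact_mod_cast Nat.floor_natCast (j + 1)
    rcases hj.lt_or_eq with hj | rfl
    · simp only [stair, this, min_eq_left (show j + 1 ≤ k from hj), pt_succ]
      rw [h2]; push_cast
      congr 1 <;> ring
    · simp only [stair, this, min_eq_right (Nat.le_succ j)]

lemma exists_piece (k : ℕ) {t : ℝ} (ht : t ∈ Icc (0 : ℝ) 1) :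
    ∃ j ≤ k, (j : ℝ) ≤ (k + 1) * t ∧ (k + 1) * t ≤ j + 1 ∧ (j < k → (k + 1) * t < j + 1) := by
  have hk : (0 : ℝ) ≤ (k + 1) * t := mul_nonneg (by positivity) ht.1
  rcases le_total ⌊(k + 1) * t⌋₊ k with h | h
  · have := Nat.lt_floor_add_one ((k + 1) * t)
    exact ⟨_, h, Nat.floor_le hk, this.le, fun _ => this⟩
  · exact ⟨k, le_rfl, (Nat.le_floor_iff hk).1 h, by nlinarith [ht.2], fun h => absurd h (by simp)⟩

lemma mem_Im_stair {k : ℕ} {c : ℕ → ℝ} (hc : StrictMono c) (p : Pt) :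
    p ∈ Im (stair k c) ↔ ∃ j ≤ k, ∃ x ∈ Icc (c j) (c (j + 2)), p = pt j x (c (j + 1)) := by
  constructor
  · rintro ⟨t, ht, rfl⟩
    obtain ⟨j, hj, h1, h2, -⟩ := exists_piece k ht
    have hcj := hc (show j < j + 2 by omega)
    refine ⟨j, hj, _, ⟨?_, ?_⟩, stair_eq hj h1 h2⟩ <;> nlinarith
  · rintro ⟨j, hj, x, hx, rfl⟩
    have hcj := hc (show j < j + 2 by omega)
    have hpos : 0 < c (j + 2) - c j := by linarith
    have hk : (0 : ℝ) < k + 1 := by positivity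
    have hjk : (j : ℝ) ≤ k := by exact_mod_cast hj
    set u := (x - c j) / (c (j + 2) - c j) with hu
    have hu0 : 0 ≤ u := div_nonneg (by linarith [hx.1]) hpos.le
    have hu1 : u ≤ 1 := (div_le_one hpos).2 (by linarith [hx.2])
    have ht : (k + 1) * ((j + u) / (k + 1)) = j + u := by field_simp
    refine ⟨(j + u) / (k + 1), ⟨by positivity, (div_le_one hk).2 (by linarith)⟩, ?_⟩
    rw [stair_eq hj (by rw [ht]; linarith) (by rw [ht]; linarith), ht]
    congr 1
    rw [hu]; field_simp; ring

lemma pt_sum (j : ℕ) (u v : ℝ) : (pt j u v).1 + (pt j u v).2 = u + v := by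
  by_cases hj : Even j <;> simp [pt, hj, add_comm]

/-- The sum of the coordinates increases along a staircase, so it is a simple curve. -/
lemma stair_injOn {k : ℕ} {c : ℕ → ℝ} (hc : StrictMono c) : InjOn (stair k c) (Icc 0 1) := by
  have hmono : StrictMonoOn (fun t => (stair k c t).1 + (stair k c t).2) (Icc 0 1) := by
    intro s hs t ht hst
    obtain ⟨i, hi, i1, i2, i3⟩ := exists_piece k hs
    obtain ⟨j, hj, j1, j2, -⟩ := exists_piece k ht
    simp only [stair_eq hi i1 i2, stair_eq hj j1 j2, pt_sum]
    have hst' : ((k : ℝ) + 1) * s < (k + 1) * t := by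
      have : (0 : ℝ) < k + 1 := by positivity
      nlinarith
    have hcj := hc (show j < j + 2 by omega)
    have hci := hc (show i < i + 2 by omega)
    rcases lt_trichotomy i j with h | rfl | h
    · have e1 := hc.monotone (show i + 1 ≤ j by omega)
      have e2 := hc.monotone (show i + 2 ≤ j + 1 by omega)
      have i4 := i3 (by omega)
      nlinarith
    · nlinarith
    · have : (j : ℝ) + 1 ≤ i := by exact_mod_cast h
      linarith
  intro s hs t ht hst
  exact hmono.injOn hs ht (by simp only [hst])

lemma stair_isKBendCurve {k : ℕ} {c : ℕ → ℝ} (hc : StrictMono c) :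
    IsKBendCurve k (stair k c) := by
  have hk : (0 : ℝ) < k + 1 := by positivity
  refine ⟨stair_injOn hc, fun i => (i : ℕ) / ((k : ℝ) + 1), by simp, ?_, ?_, ?_⟩
  · simp only [Fin.val_last]; push_cast; field_simp
  · intro i j hij
    have : ((i : ℕ) : ℝ) ≤ (j : ℕ) := by exact_mod_cast hij
    simp only
    gcongr
  · rintro ⟨j, hj⟩
    simp only [Fin.val_castSucc, Fin.val_succ]
    refine ⟨pt j (c j - j * (c (j + 2) - c j)) (c (j + 1)),
      pt j ((k + 1) * (c (j + 2) - c j)) 0, ?_, ?_⟩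
    · by_cases h : Even j <;> simp [pt, h]
    · rintro x ⟨h1, h2⟩
      rw [div_le_iff₀ hk] at h1
      rw [le_div_iff₀ hk] at h2
      push_cast at h2
      rw [stair_eq (j := j) (by omega) (by linarith) (by linarith)]
      by_cases h : Even j
      · simp only [pt, h, if_true]; ext <;> ring
      · simp only [pt, h, if_false]; ext <;> ring

lemma stair_hasCoords {k : ℕ} {c : ℕ → ℝ} (hc : StrictMono c) :
    HasCoords (stair k c) (c '' Iio (k + 3)) := by
  have hm : ∀ j < k + 3, c j ∈ c '' Iio (k + 3) := fun j hj => mem_image_of_mem c hj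
  refine ⟨(finite_Iio _).image c, ?_, ?_⟩
  · have e0 : stair k c 0 = pt 0 (c 0) (c 1) := by
      rw [stair_eq (j := 0) (by omega) (by simp) (by simp)]; simp
    have e1 : stair k c 1 = pt k (c (k + 2)) (c (k + 1)) := by
      rw [stair_eq (j := k) le_rfl (by simp) (by simp)]; congr 1; ring
    rw [e0, e1]
    by_cases h : Even k
    · simp only [pt, h, if_true, Even.zero]
      exact ⟨hm _ (by omega), hm _ (by omega), hm _ (by omega), hm _ (by omega)⟩
    · simp only [pt, h, if_true, if_false, Even.zero]
      exact ⟨hm _ (by omega), hm _ (by omega), hm _ (by omega), hm _ (by omega)⟩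
  · intro p hp
    obtain ⟨j, hj, x, hx, rfl⟩ := (mem_Im_stair hc p).1 hp
    exact ⟨j, c j, c (j + 2), x, c (j + 1), hm _ (by omega), hm _ (by omega), hm _ (by omega), hx,
      rfl, fun x' hx' => (mem_Im_stair hc _).2 ⟨j, hj, x', hx', rfl⟩⟩

/-- The straight segment consisting of the points `pt i a y` with `y ∈ [lo, hi]`. -/
noncomputable def ruler (i : ℕ) (a lo hi : ℝ) (t : ℝ) : Pt := pt i a (lo + t * (hi - lo))

lemma mem_Im_ruler {i : ℕ} {a lo hi : ℝ} (h : lo < hi) (p : Pt) :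
    p ∈ Im (ruler i a lo hi) ↔ ∃ y ∈ Icc lo hi, p = pt i a y := by
  have hpos : 0 < hi - lo := by linarith
  constructor
  · rintro ⟨t, ht, rfl⟩
    exact ⟨_, ⟨by nlinarith [ht.1], by nlinarith [ht.2]⟩, rfl⟩
  · rintro ⟨y, hy, rfl⟩
    refine ⟨(y - lo) / (hi - lo), ⟨div_nonneg (by linarith [hy.1]) hpos.le,
      (div_le_one hpos).2 (by linarith [hy.2])⟩, ?_⟩
    unfold ruler
    congr 1
    field_simp; ring

lemma ruler_isKBendCurve (k : ℕ) {i : ℕ} {a lo hi : ℝ} (h : lo < hi) :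
    IsKBendCurve k (ruler i a lo hi) := by
  have hk : (0 : ℝ) < k + 1 := by positivity
  refine ⟨?_, fun i => (i : ℕ) / ((k : ℝ) + 1), by simp, ?_, ?_, ?_⟩
  · intro s _ t _ hst
    have := congrArg (fun p : Pt => p.1 + p.2) hst
    simp only [ruler, pt_sum] at this
    have hpos : hi - lo ≠ 0 := by linarith
    exact mul_right_cancel₀ hpos (by linarith)
  · simp only [Fin.val_last]; push_cast; field_simp
  · intro i j hij
    have : ((i : ℕ) : ℝ) ≤ (j : ℕ) := by exact_mod_cast hij
    simp only
    gcongr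
  · intro j
    refine ⟨pt i a lo, pt i 0 (hi - lo), ?_, ?_⟩
    · by_cases h : Even i <;> simp [pt, h]
    · intro x _
      by_cases h : Even i <;> simp [ruler, pt, h]

lemma ruler_hasCoords {i : ℕ} {a lo hi : ℝ} (h : lo < hi) :
    HasCoords (ruler i a lo hi) {a, lo, hi} := by
  refine ⟨by simp, ?_, ?_⟩
  · by_cases h : Even i <;> simp [ruler, pt, h]
  · intro p hp
    obtain ⟨y, hy, rfl⟩ := (mem_Im_ruler h p).1 hp
    refine ⟨i + 1, lo, hi, y, a, by simp, by simp, by simp, hy, by rw [pt_succ], ?_⟩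
    intro x' hx'
    rw [pt_succ]
    exact (mem_Im_ruler h _).2 ⟨x', hx', rfl⟩

/-- A ruler across the line of the `s`-th segment of a staircase, missing the lines of all
other parallel segments, meets the staircase exactly when it meets that segment. -/
lemma stair_inter_ruler {k : ℕ} {c : ℕ → ℝ} (hc : StrictMono c) {i s : ℕ} {a lo hi : ℝ}
    (hlh : lo < hi) (hs : s ≤ k) (hpar : Even i ↔ Even s) (ha : ∀ j, a ≠ c j)
    (hmem : c (s + 1) ∈ Icc lo hi) (hout : ∀ j, j ≠ s → c (j + 1) ∉ Icc lo hi) :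
    (Im (stair k c) ∩ Im (ruler i a lo hi)).Nonempty ↔ a ∈ Icc (c s) (c (s + 2)) := by
  have hpt : ∀ u v, pt i u v = pt s u v := fun u v => by simp only [pt, hpar]
  constructor
  · rintro ⟨p, hp, hp'⟩
    obtain ⟨j, hj, x, hx, rfl⟩ := (mem_Im_stair hc p).1 hp
    obtain ⟨y, hy, he⟩ := (mem_Im_ruler hlh _).1 hp'
    rw [hpt] at he
    by_cases hjs : Even j ↔ Even s
    · have : x = a ∧ c (j + 1) = y := by
        by_cases h : Even s
        · simpa [pt, hjs, h] using he
        · simpa [pt, hjs, h, and_comm] using he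
      obtain ⟨rfl, rfl⟩ := this
      have : j = s := by
        by_contra hne
        exact hout j hne hy
      exact this ▸ hx
    · exfalso
      have : c (j + 1) = a := by
        by_cases h : Even s
        · have hj' : ¬ Even j := by tauto
          simp [pt, hj', h] at he; exact he.1
        · have hj' : Even j := by tauto
          simp [pt, hj', h] at he; exact he.2
      exact ha _ this.symm
  · intro h
    refine ⟨pt s a (c (s + 1)), (mem_Im_stair hc _).2 ⟨s, hs, a, h, rfl⟩,
      (mem_Im_ruler hlh _).2 ⟨c (s + 1), hmem, by rw [hpt]⟩⟩

/-! ### The configuration -/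

/-- The parameters `c 0 < c 1 < ⋯` of the staircase with code `F`: the `i`-th parameter lies in the
zone `[(2 * M + 2) * i, (2 * M + 2) * i + 2 * M)`, in the slot `F i`, and all of
them are shifted by `η`. -/
noncomputable def stairParam (M : ℕ) (F : ℕ → ℕ) (η : ℝ) (i : ℕ) : ℝ :=
  ((2 * M + 2) * i + 2 * F i : ℕ) + η

lemma stairParam_strictMono {M : ℕ} {F : ℕ → ℕ} (hF : ∀ i, F i < M) (η : ℝ) :
    StrictMono (stairParam M F η) := by
  refine strictMono_nat_of_lt_succ fun i => ?_
  unfold stairParam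
  have h1 : (2 * M + 2) * (i + 1) = (2 * M + 2) * i + (2 * M + 2) := by ring
  have h2 : (2 * M + 2) * i + 2 * F i < (2 * M + 2) * (i + 1) + 2 * F (i + 1) := by
    have := hF i
    omega
  have : (((2 * M + 2) * i + 2 * F i : ℕ) : ℝ) < ((2 * M + 2) * (i + 1) + 2 * F (i + 1) : ℕ) := by
    exact_mod_cast h2
  linarith

/-- The segment on which the `i`-th parameter of a staircase with `k` bends is read off: segment `i`
starts there, while for the last two parameters segment `i - 2` ends there. -/
def segOf (k i : ℕ) : ℕ := if i ≤ k then i else i - 2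

/-- The `a`-th ruler of the `i`-th parameter, shifted by `η`: it lies just beyond the slot `a` of
zone `i` and spans zone `segOf k i + 1` in the other direction. -/
noncomputable def rulerOf (k M i a : ℕ) (η : ℝ) : ℝ → Pt :=
  ruler i (((2 * M + 2) * i + 2 * a + 1 : ℕ) + η)
    (((2 * M + 2) * (segOf k i + 1) - 1 : ℤ) + η)
    (((2 * M + 2) * (segOf k i + 1) + 2 * M : ℤ) + η)

lemma rulerOf_lt (M s : ℕ) (η : ℝ) :
    (((2 * M + 2) * (s + 1) - 1 : ℤ) : ℝ) + η < (((2 * M + 2) * (s + 1) + 2 * M : ℤ) : ℝ) + η := by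
  push_cast
  have : (0 : ℝ) ≤ M := by positivity
  linarith

lemma int_add_lt {x y : ℤ} {η θ : ℝ} (hη : η < 1) (hθ : 0 ≤ θ) (h : x < y) :
    (x : ℝ) + η < y + θ := by
  have : (x : ℝ) + 1 ≤ y := by exact_mod_cast h
  linarith

lemma int_add_ne {x y : ℤ} {η θ : ℝ} (hη : η ∈ Ico (0 : ℝ) 1) (hθ : θ ∈ Ico (0 : ℝ) 1)
    (h : η ≠ θ) : (x : ℝ) + η ≠ y + θ := by
  intro he
  rcases lt_trichotomy x y with hxy | rfl | hxy
  · exact (int_add_lt hη.2 hθ.1 hxy).ne he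
  · exact h (by linarith)
  · exact (int_add_lt hθ.2 hη.1 hxy).ne he.symm

/-- Incidence between staircases and rulers compares the `i`-th slot of the staircase with the
slot of the ruler. -/
lemma stair_inter_rulerOf {k M i a : ℕ} (hk : 1 ≤ k) (hi : i < k + 3) {F : ℕ → ℕ}
    (ha : a < M) (hF : ∀ i, F i < M) {η θ : ℝ} (hη : η ∈ Ico (0 : ℝ) 1) (hθ : θ ∈ Ico (0 : ℝ) 1)
    (hne : η ≠ θ) :
    (Im (stair k (stairParam M F η)) ∩ Im (rulerOf k M i a θ)).Nonempty ↔
      if i ≤ k then F i ≤ a else a < F i := by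
  have hpar : Even i ↔ Even (segOf k i) := by
    unfold segOf
    split_ifs with h
    · rfl
    · rw [Nat.even_sub (by omega)]; simp
  have hs : segOf k i ≤ k := by unfold segOf; split_ifs <;> omega
  have hc : ∀ j, stairParam M F η j = (((2 * M + 2) * j + 2 * F j : ℤ) : ℝ) + η := fun j => by
    simp [stairParam]
  have hpos : (((2 * M + 2) * i + 2 * a + 1 : ℕ) : ℝ) + θ =
    (((2 * M + 2) * i + 2 * a + 1 : ℤ) : ℝ) + θ := by push_cast; ring
  have le_of : ∀ {x y : ℤ} {u v : ℝ}, u ∈ Ico (0 : ℝ) 1 → v ∈ Ico (0 : ℝ) 1 → x < y →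
    (x : ℝ) + u ≤ y + v := fun hu hv h => (int_add_lt hu.2 hv.1 h).le
  unfold rulerOf
  rw [stair_inter_ruler (stairParam_strictMono hF η) (rulerOf_lt _ _ _) hs hpar]
  · have hFi := hF i
    rw [hpos, hc, hc, mem_Icc]
    by_cases h : i ≤ k
    · simp only [h, if_true, segOf]
      have hup := hF (i + 2)
      constructor
      · rintro ⟨h1, -⟩
        by_contra hcon
        refine absurd h1 (not_le.2 (int_add_lt hθ.2 hη.1 ?_))
        have : (a : ℤ) < F i := by exact_mod_cast not_le.1 hcon
        linarith
      · intro hle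
        have : (F i : ℤ) ≤ a := by exact_mod_cast hle
        refine ⟨le_of hη hθ (by linarith), le_of hθ hη ?_⟩
        have : (a : ℤ) < M := by exact_mod_cast ha
        push_cast
        nlinarith
    · obtain ⟨l, rfl⟩ : ∃ l, i = l + 2 := ⟨i - 2, by omega⟩
      simp only [h, if_false, segOf, Nat.add_sub_cancel]
      have hup : (F l : ℤ) < M := by exact_mod_cast hF l
      constructor
      · rintro ⟨-, h1⟩
        by_contra hcon
        refine absurd h1 (not_le.2 (int_add_lt hη.2 hθ.1 ?_))
        have : (F (l + 2) : ℤ) ≤ a := by exact_mod_cast not_lt.1 hcon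
        push_cast
        linarith
      · intro hlt
        have : (a : ℤ) < F (l + 2) := by exact_mod_cast hlt
        refine ⟨le_of hη hθ ?_, le_of hθ hη (by push_cast; linarith)⟩
        push_cast
        nlinarith
  · intro j
    rw [hpos, hc]
    exact int_add_ne hθ hη hne.symm
  · rw [hc]
    have : (F (segOf k i + 1) : ℤ) < M := by exact_mod_cast hF _
    refine ⟨le_of hθ hη ?_, le_of hη hθ ?_⟩ <;> push_cast <;> linarith
  · rintro j hj ⟨h1, h2⟩
    rw [hc] at h1 h2
    rcases lt_or_gt_of_ne hj with hj | hj
    · refine absurd h1 (not_le.2 (int_add_lt hη.2 hθ.1 ?_))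
      have h3 : (F (j + 1) : ℤ) < M := by exact_mod_cast hF _
      have h4 : (j : ℤ) + 1 ≤ segOf k i := by exact_mod_cast hj
      push_cast
      nlinarith
    · refine absurd h2 (not_le.2 (int_add_lt hθ.2 hη.1 ?_))
      have h4 : (segOf k i : ℤ) + 1 ≤ j := by exact_mod_cast hj
      push_cast
      nlinarith

/-- Vertices of the graph: `M` rulers for each of the `k + 3` parameters, and one staircase for each
choice of slots. -/
abbrev Vert (k M : ℕ) : Type := (Fin (k + 3) × Fin M) ⊕ (Fin (k + 3) → Fin M)

/-- A choice of slots as a function on `ℕ`, extended by `0`. -/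
def slot {k M : ℕ} (F : Fin (k + 3) → Fin M) (i : ℕ) : ℕ :=
  if h : i < k + 3 then F ⟨i, h⟩ else 0

lemma slot_lt {k M : ℕ} (F : Fin (k + 3) → Fin M) (hM : 0 < M) (i : ℕ) : slot F i < M := by
  unfold slot
  split_ifs
  · exact Fin.is_lt _
  · exact hM

/-- The curve of a vertex, shifted by `η`. -/
noncomputable def curve (k M : ℕ) (η : ℝ) : Vert k M → ℝ → Pt
  | .inl (i, a) => rulerOf k M i a η
  | .inr F => stair k (stairParam M (slot F) η)

lemma curve_isKBendCurve {k M : ℕ} (hM : 0 < M) (η : ℝ) (v : Vert k M) :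
    IsKBendCurve k (curve k M η v) := by
  rcases v with ⟨i, a⟩ | F
  · exact ruler_isKBendCurve k (rulerOf_lt _ _ _)
  · exact stair_isKBendCurve (stairParam_strictMono (slot_lt F hM) η)

/-- All coordinates of a curve agree with its shift modulo `1`, so that curves with different
shifts share no coordinate. -/
lemma curve_hasCoords {k M : ℕ} (hM : 0 < M) (η : ℝ) (v : Vert k M) :
    ∃ S : Set ℝ, HasCoords (curve k M η v) S ∧ ∀ x ∈ S, ∃ z : ℤ, x = z + η := by
  rcases v with ⟨i, a⟩ | F
  · refine ⟨_, ruler_hasCoords (rulerOf_lt _ _ _), ?_⟩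
    rintro x (rfl | rfl | rfl)
    · exact ⟨((2 * M + 2) * i + 2 * a + 1 : ℕ), by push_cast; ring⟩
    · exact ⟨_, rfl⟩
    · exact ⟨_, rfl⟩
  · refine ⟨_, stair_hasCoords (stairParam_strictMono (slot_lt F hM) η), ?_⟩
    rintro x ⟨j, -, rfl⟩
    exact ⟨((2 * M + 2) * j + 2 * slot F j : ℕ), by simp [stairParam]⟩

/-- With enough rulers, staircases with `k` bends have more traces than `trace_bound` allows for
curves with `k` segments. -/
lemma exists_large (k : ℕ) : ∃ M : ℕ, 0 < M ∧
    2 ^ k * (4 * ((k + 3) * M) * (k + 1) + 1) ^ (k + 2) < M ^ (k + 3) := by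
  set D := 2 ^ k * (4 * (k + 3) * (k + 1) + 1) ^ (k + 2) with hD
  refine ⟨D + 1, by omega, ?_⟩
  calc 2 ^ k * (4 * ((k + 3) * (D + 1)) * (k + 1) + 1) ^ (k + 2)
      ≤ 2 ^ k * ((4 * (k + 3) * (k + 1) + 1) * (D + 1)) ^ (k + 2) := by
        gcongr
        nlinarith
    _ = D * (D + 1) ^ (k + 2) := by rw [mul_pow, ← mul_assoc]
    _ < (D + 1) * (D + 1) ^ (k + 2) := by
        have : 0 < (D + 1) ^ (k + 2) := by positivity
        nlinarith
    _ = (D + 1) ^ (k + 3) := by ring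

/-- For every integer `k ≥ 1` there is a graph `G` that has a *proper*
representation by axis-parallel curves with at most `k` bends each, but has no
representation (proper or not) by axis-parallel curves with at most `k-1` bends each. -/
theorem exists_graph_in_Bk_proper_not_in_Bk_minus_one (k : ℕ) (hk : 1 ≤ k) :
    ∃ (n : ℕ) (G : SimpleGraph (Fin n)) (R : Fin n → ℝ → Pt),
      (∀ v, IsKBendCurve k (R v)) ∧ Represents G R ∧ IsProperRep R ∧
      ¬ ∃ R' : Fin n → ℝ → Pt,
          (∀ v, IsKBendCurve (k - 1) (R' v)) ∧ Represents G R' := by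
  obtain ⟨M, hM, hlarge⟩ := exists_large k
  let n := Fintype.card (Vert k M)
  let e : Vert k M ≃ Fin n := Fintype.equivFin _
  -- pairwise distinct shifts in `[0, 1)`
  let η : Fin n → ℝ := fun v => (v : ℕ) / (n : ℝ)
  have hη : ∀ v, η v ∈ Ico (0 : ℝ) 1 := fun v => by
    have hn : (0 : ℝ) < n := by exact_mod_cast v.pos
    refine ⟨by positivity, (div_lt_one hn).2 (by exact_mod_cast v.is_lt)⟩
  have hηne : ∀ u v, u ≠ v → η u ≠ η v := fun u v huv h => by
    have hn : (n : ℝ) ≠ 0 := by exact_mod_cast v.pos.ne'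
    have : ((u : ℕ) : ℝ) = (v : ℕ) := (div_left_inj' hn).1 h
    exact huv (Fin.ext (by exact_mod_cast this))
  let R : Fin n → ℝ → Pt := fun v => curve k M (η v) (e.symm v)
  let G : SimpleGraph (Fin n) :=
    { Adj := fun u v => u ≠ v ∧ (Im (R u) ∩ Im (R v)).Nonempty
      symm := ⟨fun u v h => ⟨h.1.symm, by rw [inter_comm]; exact h.2⟩⟩
      loopless := ⟨fun v h => h.1 rfl⟩ }
  refine ⟨n, G, R, fun v => curve_isKBendCurve hM _ _, fun u v huv => ?_, ?_, ?_⟩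
  · exact ⟨fun h => ⟨huv, h⟩, fun h => h.2⟩
  · choose S hS hSz using fun v : Fin n => curve_hasCoords hM (η v) (e.symm v)
    refine isProperRep_of_hasCoords hS fun u v huv => disjoint_left.2 fun x hu hv => ?_
    obtain ⟨z, rfl⟩ := hSz u x hu
    obtain ⟨z', hz'⟩ := hSz v _ hv
    exact int_add_ne (hη u) (hη v) (hηne u v huv) hz'
  · rintro ⟨R', hR', hrep⟩
    simp only [IsKBendCurve, Nat.sub_add_cancel hk] at hR'
    have hne : ∀ (F : Fin (k + 3) → Fin M) (x : Fin (k + 3) × Fin M),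
        e (.inr F) ≠ e (.inl x) := fun F x h => by simpa using e.injective h
    have hb := trace_bound k (fun x : Fin (k + 3) × Fin M => R' (e (.inl x)))
      (fun F : Fin (k + 3) → Fin M => R' (e (.inr F))) (fun _ => hR' _) (fun _ => hR' _) ?_
    · simp only [Fintype.card_prod, Fintype.card_fin, Fintype.card_fun] at hb
      omega
    · intro F F' htr
      have key : ∀ (F : Fin (k + 3) → Fin M) (i : Fin (k + 3)) (a : Fin M),
          (Im (R' (e (.inr F))) ∩ Im (R' (e (.inl (i, a))))).Nonempty ↔
            if (i : ℕ) ≤ k then F i ≤ a else a < F i := by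
        intro F i a
        rw [hrep _ _ (hne F (i, a))]
        have := stair_inter_rulerOf hk i.is_lt a.is_lt (slot_lt F hM) (hη (e (.inr F)))
          (hη (e (.inl (i, a)))) (hηne _ _ (hne F (i, a)))
        simp only [slot, i.is_lt, dif_pos, Fin.eta, Fin.val_fin_le, Fin.val_fin_lt] at this
        rw [← this]
        simp only [G, R, Equiv.symm_apply_apply, curve]
        exact and_iff_right (hne F (i, a))
      funext i
      have h1 := htr (i, F i)
      have h2 := htr (i, F' i)
      simp only [key] at h1 h2
      split_ifs at h1 h2
      · exact le_antisymm (h2.2 le_rfl) (h1.1 le_rfl)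
      · simp only [lt_irrefl, false_iff, iff_false, not_lt] at h1 h2
        exact le_antisymm h2 h1
end

section
/- For every integer k ≥ 1, the class B_k-VPG is not contained in the class SEG; that is, there exists a simple graph that has a B_k-VPG representation (indeed already a B_1-VPG representation) but has no representation as an intersection graph of straight line segments in the plane. -/
/-!
The graph is the intersection graph of all L-shaped curves whose corners and ends are coded by
naturals below a large bound `M`. Each such curve has one bend, so it is also a `k`-bend curve for
every `k ≥ 1`. Suppose that the graph were represented by segments.

Among the L-shapes are the rows and columns of an `N × N` grid, and a *mark* for every cell that
meets the row and the column of that cell and no other. By a product version of the theorem of Ramsey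
(`ramsey_grid`) there are 8 rows and 8 columns whose segments are in uniform position
(`exists_cleanGrid`): crossings appear along rows and columns in the order of the indices, all have
the same orientation, and the contacts of the marks with their rows and columns all lie in the same
direction. Rows and columns are not parallel, since a four-cycle is not an interval graph.

A mark cannot overshoot both along its column and along its row: with its row and column it would
bound a triangle, from which the mark of another cell could not get out (`triangle_conflict`,
`local_X_or_Y`). Hence each mark is trapped in the quadrilateral between the neighbouring rows and
columns (`mark_inQuad`).

Finally an L with ends at the marks `(6, 3)` and `(3, 6)`, and a 7 with ends at the marks `(4, 1)` and
`(1, 4)`, cross each other and avoid suitable rows and columns around them. Both segments are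
confined to quadrilaterals (`inQuad_of_mem`), and the common point lies in the quadrilateral
spanned by the rows and columns `2` and `5`. The first segment leaves this quadrilateral through its
top and right sides, the second through its left and bottom sides, so their common point would be
both above and below the diagonal from `P 5 2` to `P 2 5` (`CleanGrid.false_of_L_seven`).
-/

open Set Metric

/-! ### Ramsey for grids -/

/-- A large set contains a large subset on which the colour of a pair depends only on its
smaller element: peel off the minimum and keep the most popular colour class. -/
theorem ramsey_prehomogeneous {κ : Type*} [Fintype κ] (n : ℕ) :
    ∃ N : ℕ, ∀ (χ : ℕ → ℕ → κ) (S : Finset ℕ), N ≤ S.card →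
      ∃ T ⊆ S, T.card = n ∧ ∃ col : ℕ → κ, ∀ x ∈ T, ∀ y ∈ T, x < y → χ x y = col x := by
  classical
  induction n with
  | zero => exact ⟨0, fun χ S _ => ⟨∅, by simp, by simp, fun x => χ x x, by simp⟩⟩
  | succ n ih =>
    obtain ⟨N, hN⟩ := ih
    refine ⟨Fintype.card κ * N + 1, fun χ S hS => ?_⟩
    have hne : S.Nonempty := Finset.card_pos.1 (by omega)
    set m := S.min' hne with hm
    have hmS : m ∈ S := S.min'_mem hne
    have : Nonempty κ := ⟨χ 0 0⟩
    obtain ⟨c, -, hc⟩ := Finset.exists_le_card_fiber_of_mul_le_card_of_maps_to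
      (s := S.erase m) (t := (Finset.univ : Finset κ)) (f := fun x => χ m x) (n := N)
      (fun _ _ => Finset.mem_univ _) Finset.univ_nonempty
      (by rw [Finset.card_erase_of_mem hmS, Finset.card_univ]; omega)
    obtain ⟨T, hT, hcard, col, hcol⟩ := hN χ _ hc
    have hTm : ∀ x ∈ T, m < x ∧ x ∈ S ∧ χ m x = c := by
      intro x hx
      have h1 := Finset.mem_filter.1 (hT hx)
      have h2 := Finset.mem_erase.1 h1.1
      exact ⟨lt_of_le_of_ne (S.min'_le x h2.2) (Ne.symm h2.1), h2.2, h1.2⟩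
    refine ⟨insert m T, ?_, ?_, Function.update col m c, ?_⟩
    · intro x hx
      rcases Finset.mem_insert.1 hx with rfl | hx
      · exact hmS
      · exact (hTm x hx).2.1
    · rw [Finset.card_insert_of_notMem (fun h => lt_irrefl _ (hTm m h).1), hcard]
    · intro x hx y hy hxy
      rcases Finset.mem_insert.1 hx with rfl | hx
      · rcases Finset.mem_insert.1 hy with rfl | hy
        · exact absurd hxy (lt_irrefl _)
        · simpa using (hTm y hy).2.2
      · rcases Finset.mem_insert.1 hy with rfl | hy
        · exact absurd hxy (not_lt.2 (hTm x hx).1.le)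
        · rw [Function.update_of_ne (hTm x hx).1.ne']
          exact hcol x hx y hy hxy

/-- The theorem of Ramsey for pairs, with the homogeneous set enumerated increasingly. -/
theorem ramsey_pairs (κ : Type*) [Fintype κ] (K : ℕ) :
    ∃ N : ℕ, ∀ χ : ℕ → ℕ → κ, ∃ f : Fin K → ℕ, StrictMono f ∧ (∀ i, f i < N) ∧
      ∃ c, ∀ i j, i < j → χ (f i) (f j) = c := by
  classical
  obtain ⟨N, hN⟩ := ramsey_prehomogeneous (κ := κ) (Fintype.card κ * K)
  refine ⟨N, fun χ => ?_⟩
  have : Nonempty κ := ⟨χ 0 0⟩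
  obtain ⟨T, hTS, hcard, col, hcol⟩ := hN χ (Finset.range N) (by simp)
  obtain ⟨c, -, hc⟩ := Finset.exists_le_card_fiber_of_mul_le_card_of_maps_to
      (s := T) (t := (Finset.univ : Finset κ)) (f := col) (n := K)
      (fun _ _ => Finset.mem_univ _) Finset.univ_nonempty
      (by rw [hcard, Finset.card_univ])
  obtain ⟨T', hT', hcard'⟩ := Finset.exists_subset_card_eq hc
  have hmem : ∀ i, T'.orderEmbOfFin hcard' i ∈ T ∧ col (T'.orderEmbOfFin hcard' i) = c :=
    fun i => Finset.mem_filter.1 (hT' (T'.orderEmbOfFin_mem hcard' i))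
  refine ⟨T'.orderEmbOfFin hcard', (T'.orderEmbOfFin hcard').strictMono,
    fun i => Finset.mem_range.1 (hTS (hmem i).1), c, fun i j hij => ?_⟩
  rw [hcol _ (hmem i).1 _ (hmem j).1 ((T'.orderEmbOfFin hcard').strictMono hij), (hmem i).2]

/-- Ramsey for products: a colouring of (pair of rows, pair of columns) is constant on the pairs
of a large subgrid. The columns are chosen first, with a pair of columns coloured by the whole
table of colours that it induces on pairs of rows. -/
theorem ramsey_grid (κ : Type*) [Fintype κ] (K : ℕ) :
    ∃ N : ℕ, ∀ χ : ℕ → ℕ → ℕ → ℕ → κ, ∃ f g : Fin K → ℕ, StrictMono f ∧ StrictMono g ∧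
      (∀ i, f i < N) ∧ (∀ j, g j < N) ∧
      ∃ c, ∀ i i', i < i' → ∀ j j', j < j' → χ (f i) (f i') (g j) (g j') = c := by
  classical
  obtain ⟨N₁, h₁⟩ := ramsey_pairs κ K
  obtain ⟨N₂, h₂⟩ := ramsey_pairs (Fin N₁ → Fin N₁ → κ) K
  refine ⟨max N₁ N₂, fun χ => ?_⟩
  obtain ⟨g, hg, hgN, c₂, hc₂⟩ := h₂ fun j j' i i' => χ i i' j j'
  obtain ⟨f, hf, hfN, c, hc⟩ := h₁ fun i i' =>
    if h : i < N₁ ∧ i' < N₁ then c₂ ⟨i, h.1⟩ ⟨i', h.2⟩ else χ 0 0 0 0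
  refine ⟨f, g, hf, hg, fun i => lt_max_of_lt_left (hfN i), fun j => lt_max_of_lt_right (hgN j),
    c, fun i i' hi j j' hj => ?_⟩
  have h := hc i i' hi
  rw [dif_pos ⟨hfN i, hfN i'⟩, ← hc₂ j j' hj] at h
  exact h

/-! ### The triangle argument -/

/-- First exit from an open polygon: on the way from a point `A` where finitely many affine
functionals are positive to a point `B` where they are not all positive, there is a point where
all are still nonnegative and one of them vanishes. -/
theorem exists_exit {n : ℕ} (F : Fin n → Pt → ℝ)
    (hF : ∀ k (A B : Pt) (θ : ℝ), F k (A + θ • (B - A)) = F k A + θ * (F k B - F k A))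
    {A B : Pt} (hA : ∀ k, 0 < F k A) (hB : ∃ k, F k B ≤ 0) :
    ∃ θ : ℝ, 0 ≤ θ ∧ θ ≤ 1 ∧ (∀ k, 0 ≤ F k (A + θ • (B - A))) ∧
      ∃ k, F k (A + θ • (B - A)) = 0 := by
  classical
  obtain ⟨k₀, hk₀⟩ := hB
  let r : Fin n → ℝ := fun k => F k A / (F k A - F k B)
  obtain ⟨k, hk, hmin⟩ := Finset.exists_min_image
    (Finset.univ.filter fun k => F k B ≤ 0) r ⟨k₀, by simpa using hk₀⟩
  have hkB : F k B ≤ 0 := by simpa using hk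
  have hkA := hA k
  have hd : 0 < F k A - F k B := by linarith
  have hr0 : 0 ≤ r k := by positivity
  have hr1 : r k ≤ 1 := by
    rw [div_le_one hd]; linarith
  refine ⟨r k, hr0, hr1, fun l => ?_, k, ?_⟩
  · rw [hF]
    have hlA := hA l
    rcases le_or_gt (F l B) 0 with hl | hl
    · have h1 : r k ≤ F l A / (F l A - F l B) := hmin l (by simpa using hl)
      rw [le_div_iff₀ (by linarith)] at h1
      linarith
    · nlinarith
  · rw [hF]
    have : r k * (F k A - F k B) = F k A := div_mul_cancel₀ _ hd.ne'
    linarith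

theorem add_smul_sub_mem {s : Set Pt} (hs : Convex ℝ s) {A B : Pt} (hA : A ∈ s) (hB : B ∈ s)
    {θ : ℝ} (h0 : 0 ≤ θ) (h1 : θ ≤ 1) : A + θ • (B - A) ∈ s :=
  hs.add_smul_sub_mem hA hB ⟨h0, h1⟩

/-- The cross product of two plane vectors. -/
def cross (u w : Pt) : ℝ := u.1 * w.2 - u.2 * w.1

/-- The convex sets `v`, `h`, `x` contain the sides `pX`, `pY`, `XY` of a nondegenerate
triangle. The path `q X' Y' r`, whose three pieces lie in `v'`, `x'`, `h'`, starts inside the side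
`pY` and turns to the side of `X`, hence enters the triangle; by the disjointness assumptions it
can leave neither between `q` and `X'` nor between `X'` and `Y'`, and its last piece can neither
leave nor end at `r`, which lies outside on the line `pX` beyond `p`. -/
theorem triangle_conflict {v v' h h' x x' : Set Pt}
    (cv : Convex ℝ v) (cv' : Convex ℝ v') (ch : Convex ℝ h) (ch' : Convex ℝ h')
    (cx : Convex ℝ x) (cx' : Convex ℝ x')
    (dvv : Disjoint v v') (dhh : Disjoint h h') (dxx : Disjoint x x')
    (dxv' : Disjoint x v') (dxh' : Disjoint x h') (dx'v : Disjoint x' v) (dx'h : Disjoint x' h)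
    {p X Y q X' Y' r : Pt} (pv : p ∈ v) (Xv : X ∈ v) (ph : p ∈ h) (Yh : Y ∈ h)
    (Xx : X ∈ x) (Yx : Y ∈ x) (qv' : q ∈ v') (X'v' : X' ∈ v') (X'x' : X' ∈ x')
    (Y'x' : Y' ∈ x') (Y'h' : Y' ∈ h') (rh' : r ∈ h')
    (hD : cross (Y - p) (X - p) ≠ 0)
    {c ρ : ℝ} (hq : q = p + c • (Y - p)) (hc0 : 0 < c) (hc1 : c < 1)
    (hX' : 0 < cross (Y - p) (X' - p) / cross (Y - p) (X - p))
    (hr : r = p - ρ • (X - p)) (hρ : 0 < ρ) : False := by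
  set Δ := cross (Y - p) (X - p) with hΔ
  -- barycentric coordinates of the triangle `p Y X`: the weights at `Y`, `X` and `p`
  let α : Pt → ℝ := fun z => cross (z - p) (X - p) / Δ
  let β : Pt → ℝ := fun z => cross (Y - p) (z - p) / Δ
  let γ : Pt → ℝ := fun z => 1 - α z - β z
  have aα : ∀ (A B : Pt) (θ : ℝ), α (A + θ • (B - A)) = α A + θ * (α B - α A) := by
    intro A B θ; simp only [α, cross, Prod.fst_add, Prod.snd_add, Prod.fst_sub, Prod.snd_sub,
      Prod.smul_fst, Prod.smul_snd, smul_eq_mul]; ring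
  have aβ : ∀ (A B : Pt) (θ : ℝ), β (A + θ • (B - A)) = β A + θ * (β B - β A) := by
    intro A B θ; simp only [β, cross, Prod.fst_add, Prod.snd_add, Prod.fst_sub, Prod.snd_sub,
      Prod.smul_fst, Prod.smul_snd, smul_eq_mul]; ring
  have aγ : ∀ (A B : Pt) (θ : ℝ), γ (A + θ • (B - A)) = γ A + θ * (γ B - γ A) := by
    intro A B θ; simp only [γ, aα, aβ]; ring
  have hz : ∀ z : Pt, z = p + α z • (Y - p) + β z • (X - p) := by
    intro z
    simp only [cross, Prod.fst_sub, Prod.snd_sub] at hΔ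
    ext
    · simp only [α, β, cross, Prod.fst_add, Prod.fst_sub, Prod.snd_sub,
        Prod.smul_fst, smul_eq_mul]
      field_simp
      rw [hΔ]; ring
    · simp only [α, β, cross, Prod.snd_add, Prod.fst_sub, Prod.snd_sub,
        Prod.smul_snd, smul_eq_mul]
      field_simp
      rw [hΔ]; ring
  have inv : ∀ z, α z = 0 → 0 ≤ β z → 0 ≤ γ z → z ∈ v := by
    intro z h1 h2 h3
    have : z = p + β z • (X - p) := by
      conv_lhs => rw [hz z, h1]
      simp
    rw [this]
    exact add_smul_sub_mem cv pv Xv h2 (by simp only [γ] at h3; linarith)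
  have inh : ∀ z, β z = 0 → 0 ≤ α z → 0 ≤ γ z → z ∈ h := by
    intro z h1 h2 h3
    have : z = p + α z • (Y - p) := by
      conv_lhs => rw [hz z, h1]
      simp
    rw [this]
    exact add_smul_sub_mem ch ph Yh h2 (by simp only [γ] at h3; linarith)
  have inx : ∀ z, γ z = 0 → 0 ≤ α z → 0 ≤ β z → z ∈ x := by
    intro z h1 h2 h3
    have h4 : α z = 1 - β z := by simp only [γ] at h1; linarith
    have : z = Y + β z • (X - Y) := by
      conv_lhs => rw [hz z, h4]
      module
    rw [this]
    exact add_smul_sub_mem cx Yx Xx h3 (by linarith)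
  have αq : α q = c := by
    have : cross (q - p) (X - p) = c * Δ := by
      rw [hq, hΔ]; simp [cross]; ring
    simp only [α, this]; field_simp
  have βq : β q = 0 := by
    have : cross (Y - p) (q - p) = 0 := by
      rw [hq]; simp [cross]; ring
    simp only [β, this, zero_div]
  have αr : α r = 0 := by
    have : cross (r - p) (X - p) = 0 := by
      rw [hr]; simp [cross]; ring
    simp only [α, this, zero_div]
  have βr : β r = -ρ := by
    have : cross (Y - p) (r - p) = -ρ * Δ := by
      rw [hr, hΔ]; simp [cross]; ring
    simp only [β, this]; field_simp
  have βX' : 0 < β X' := hX'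
  have stepX : 0 < α X' ∧ 0 < γ X' := by
    -- off the line `p Y` on the side of `X`, the path can only leave through `v` or `x`
    by_contra hcon
    obtain ⟨θ, h0, h1, hpos, k, hk⟩ := exists_exit ![α, γ]
      (by intro k; fin_cases k; exacts [aα, aγ]) (A := q) (B := X')
      (by intro k; fin_cases k
          · simpa [αq] using hc0
          · simp [γ, αq, βq]; exact hc1)
      (by by_contra hno
          push Not at hno
          exact hcon ⟨by simpa using hno 0, by simpa using hno 1⟩)
    have hβ : 0 ≤ β (q + θ • (X' - q)) := by
      rw [aβ, βq]; nlinarith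
    have hmem := add_smul_sub_mem cv' qv' X'v' h0 h1
    have p0 := hpos 0
    have p1 := hpos 1
    simp only [Matrix.cons_val_zero, Matrix.cons_val_one] at p0 p1
    fin_cases k
    · exact dvv.le_bot ⟨inv _ hk hβ p1, hmem⟩
    · exact dxv'.le_bot ⟨inx _ hk p0 hβ, hmem⟩
  have stepY : 0 < α Y' ∧ 0 < β Y' ∧ 0 < γ Y' := by
    by_contra hcon
    obtain ⟨θ, h0, h1, hpos, k, hk⟩ := exists_exit ![α, β, γ]
      (by intro k; fin_cases k; exacts [aα, aβ, aγ]) (A := X') (B := Y')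
      (by intro k; fin_cases k; exacts [stepX.1, βX', stepX.2])
      (by by_contra hno
          push Not at hno
          exact hcon ⟨by simpa using hno 0, by simpa using hno 1, by simpa using hno 2⟩)
    have hmem := add_smul_sub_mem cx' X'x' Y'x' h0 h1
    have p0 : 0 ≤ α _ := hpos 0
    have p1 : 0 ≤ β _ := hpos 1
    have p2 : 0 ≤ γ _ := hpos 2
    fin_cases k
    · exact dx'v.le_bot ⟨hmem, inv _ hk p1 p2⟩
    · exact dx'h.le_bot ⟨hmem, inh _ hk p0 p2⟩
    · exact dxx.le_bot ⟨inx _ hk p0 p1, hmem⟩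
  obtain ⟨θ, h0, h1, hpos, k, hk⟩ := exists_exit ![α, β, γ]
    (by intro k; fin_cases k; exacts [aα, aβ, aγ]) (A := Y') (B := r)
    (by intro k; fin_cases k; exacts [stepY.1, stepY.2.1, stepY.2.2])
    ⟨1, by simp only [Matrix.cons_val_one, Matrix.cons_val_zero, βr]; linarith⟩
  have hmem := add_smul_sub_mem ch' Y'h' rh' h0 h1
  have p0 : 0 ≤ α _ := hpos 0
  have p1 : 0 ≤ β _ := hpos 1
  have p2 : 0 ≤ γ _ := hpos 2
  fin_cases k
  · have e : α (Y' + θ • (r - Y')) = 0 := hk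
    rw [aα, αr] at e
    have e2 : (1 - θ) * α Y' = 0 := by linarith
    have e3 : θ = 1 := by
      rcases mul_eq_zero.1 e2 with e4 | e4
      · linarith
      · exact absurd e4 stepY.1.ne'
    rw [aβ, βr, e3] at p1
    linarith
  · exact dhh.le_bot ⟨inh _ hk p0 p2, hmem⟩
  · exact dxh'.le_bot ⟨inx _ hk p0 p1, hmem⟩

/-! ### Grids in uniform position -/

/-- A grid of convex sets in uniform position: pairwise disjoint columns `V j`, pairwise disjoint
rows `H i`, and for each cell `(i, j)` a mark `x i j` that meets the row `H i` and the column `V j`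
but no other row or column. The chosen points are `P i j` on `H i` and `V j`, `X i j` on the mark
and the column, and `Y i j` on the mark and the row.

The points on `H i` are parametrized along a line `oh i + ℝ • dh i` (parameters `s` for `P` and `σ`
for `Y`), those on `V j` along `ov j + ℝ • dv j` (parameters `t` for `P` and `τ` for `X`).
Crossings are ordered along rows and columns by their indices, all crossings have the same
orientation (`κ` carries its sign), and the position of `X i j` relative to later and earlier
crossings on its column, and of `Y i j` on its row, does not depend on the cell. -/
structure CleanGrid where
  V : Fin 8 → Set Pt
  H : Fin 8 → Set Pt
  x : Fin 8 → Fin 8 → Set Pt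
  convex_V : ∀ j, Convex ℝ (V j)
  convex_H : ∀ i, Convex ℝ (H i)
  convex_x : ∀ i j, Convex ℝ (x i j)
  disj_VV : ∀ j j', j ≠ j' → Disjoint (V j) (V j')
  disj_HH : ∀ i i', i ≠ i' → Disjoint (H i) (H i')
  disj_xx : ∀ i j i' j', i ≠ i' → Disjoint (x i j) (x i' j')
  disj_xV : ∀ i j j', j ≠ j' → Disjoint (x i j) (V j')
  disj_xH : ∀ i j i', i ≠ i' → Disjoint (x i j) (H i')
  P : Fin 8 → Fin 8 → Pt
  X : Fin 8 → Fin 8 → Pt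
  Y : Fin 8 → Fin 8 → Pt
  P_mem_V : ∀ i j, P i j ∈ V j
  P_mem_H : ∀ i j, P i j ∈ H i
  X_mem_x : ∀ i j, X i j ∈ x i j
  X_mem_V : ∀ i j, X i j ∈ V j
  Y_mem_x : ∀ i j, Y i j ∈ x i j
  Y_mem_H : ∀ i j, Y i j ∈ H i
  oh : Fin 8 → Pt
  dh : Fin 8 → Pt
  ov : Fin 8 → Pt
  dv : Fin 8 → Pt
  s : Fin 8 → Fin 8 → ℝ
  t : Fin 8 → Fin 8 → ℝ
  σ : Fin 8 → Fin 8 → ℝ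
  τ : Fin 8 → Fin 8 → ℝ
  P_eq_h : ∀ i j, P i j = oh i + s i j • dh i
  P_eq_v : ∀ i j, P i j = ov j + t i j • dv j
  X_eq : ∀ i j, X i j = ov j + τ i j • dv j
  Y_eq : ∀ i j, Y i j = oh i + σ i j • dh i
  s_lt : ∀ i j j', j < j' → s i j < s i j'
  t_lt : ∀ i i' j, i < i' → t i j < t i' j
  κ : ℝ
  D_pos : ∀ i j, 0 < κ * cross (dh i) (dv j)
  up : (∀ i i' j, i < i' → t i' j < τ i j) ∨ (∀ i i' j, i < i' → τ i j < t i' j)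
  down : (∀ i i' j, i < i' → τ i' j < t i j) ∨ (∀ i i' j, i < i' → t i j < τ i' j)
  right : (∀ i j j', j < j' → s i j' < σ i j) ∨ (∀ i j j', j < j' → σ i j < s i j')
  left : (∀ i j j', j < j' → σ i j' < s i j) ∨ (∀ i j j', j < j' → s i j < σ i j')

namespace CleanGrid

variable (g : CleanGrid)

theorem P_sub_h (i j j' : Fin 8) : g.P i j' = g.P i j + (g.s i j' - g.s i j) • g.dh i := by
  rw [g.P_eq_h, g.P_eq_h]; module

theorem P_sub_v (i i' j : Fin 8) : g.P i' j = g.P i j + (g.t i' j - g.t i j) • g.dv j := by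
  rw [g.P_eq_v, g.P_eq_v]; module

/-- An affine functional vanishing on the line of the column `j`, positive to its right. -/
def R (j : Fin 8) (z : Pt) : ℝ := g.κ * cross (z - g.P 0 j) (g.dv j)

/-- An affine functional vanishing on the line of the row `i`, positive above it. -/
def U (i : Fin 8) (z : Pt) : ℝ := g.κ * cross (g.dh i) (z - g.P i 0)

/-- An affine functional vanishing on the diagonal through `P 5 2` and `P 2 5`, positive on the
upper right side. -/
def δ (z : Pt) : ℝ := g.κ * cross (g.P 2 5 - g.P 5 2) (z - g.P 5 2)

theorem R_affine (j : Fin 8) (A B : Pt) (θ : ℝ) :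
    g.R j (A + θ • (B - A)) = g.R j A + θ * (g.R j B - g.R j A) := by
  simp [R, cross]; ring

theorem U_affine (i : Fin 8) (A B : Pt) (θ : ℝ) :
    g.U i (A + θ • (B - A)) = g.U i A + θ * (g.U i B - g.U i A) := by
  simp [U, cross]; ring

theorem δ_affine (A B : Pt) (θ : ℝ) :
    g.δ (A + θ • (B - A)) = g.δ A + θ * (g.δ B - g.δ A) := by
  simp [δ, cross]; ring

theorem R_eq (i j : Fin 8) (z : Pt) : g.R j z = g.κ * cross (z - g.P i j) (g.dv j) := by
  rw [R, g.P_sub_v 0 i j]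
  simp only [cross, Prod.fst_sub, Prod.snd_sub, Prod.fst_add, Prod.snd_add, Prod.smul_fst,
    Prod.smul_snd, smul_eq_mul]
  ring

theorem U_eq (i j : Fin 8) (z : Pt) : g.U i z = g.κ * cross (g.dh i) (z - g.P i j) := by
  rw [U, g.P_sub_h i 0 j]
  simp only [cross, Prod.fst_sub, Prod.snd_sub, Prod.fst_add, Prod.snd_add, Prod.smul_fst,
    Prod.smul_snd, smul_eq_mul]
  ring

theorem R_row (i j j' : Fin 8) (r : ℝ) : g.R j (g.P i j' + r • g.dh i) =
    (g.s i j' - g.s i j + r) * (g.κ * cross (g.dh i) (g.dv j)) := by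
  rw [g.R_eq i j, g.P_sub_h i j j']; simp [cross]; ring

theorem U_col (i i' j : Fin 8) (r : ℝ) : g.U i (g.P i' j + r • g.dv j) =
    (g.t i' j - g.t i j + r) * (g.κ * cross (g.dh i) (g.dv j)) := by
  rw [g.U_eq i j, g.P_sub_v i i' j]; simp [cross]; ring

theorem exists_of_R (i j : Fin 8) {z : Pt} (h : g.R j z = 0) :
    ∃ r : ℝ, z = g.P i j + r • g.dv j := by
  have hD := g.D_pos i j
  rw [g.R_eq i j] at h
  have hκ : g.κ ≠ 0 := by rintro h0; simp [h0] at hD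
  have hc : cross (g.dh i) (g.dv j) ≠ 0 := by rintro h0; simp [h0] at hD
  have h' : cross (z - g.P i j) (g.dv j) = 0 := (mul_eq_zero.1 h).resolve_left hκ
  refine ⟨cross (g.dh i) (z - g.P i j) / cross (g.dh i) (g.dv j), ?_⟩
  simp only [cross, Prod.fst_sub, Prod.snd_sub] at h' hc ⊢
  ext
  · simp only [Prod.fst_add, Prod.smul_fst, smul_eq_mul]
    rw [← sub_eq_iff_eq_add', div_mul_eq_mul_div, eq_div_iff hc]
    linear_combination (g.dh i).1 * h'
  · simp only [Prod.snd_add, Prod.smul_snd, smul_eq_mul]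
    rw [← sub_eq_iff_eq_add', div_mul_eq_mul_div, eq_div_iff hc]
    linear_combination (g.dh i).2 * h'

theorem exists_of_U (i j : Fin 8) {z : Pt} (h : g.U i z = 0) :
    ∃ r : ℝ, z = g.P i j + r • g.dh i := by
  have hD := g.D_pos i j
  rw [g.U_eq i j] at h
  have hκ : g.κ ≠ 0 := by rintro h0; simp [h0] at hD
  have hc : cross (g.dh i) (g.dv j) ≠ 0 := by rintro h0; simp [h0] at hD
  have h' : cross (g.dh i) (z - g.P i j) = 0 := (mul_eq_zero.1 h).resolve_left hκ
  refine ⟨cross (z - g.P i j) (g.dv j) / cross (g.dh i) (g.dv j), ?_⟩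
  simp only [cross, Prod.fst_sub, Prod.snd_sub] at h' hc ⊢
  ext
  · simp only [Prod.fst_add, Prod.smul_fst, smul_eq_mul]
    rw [← sub_eq_iff_eq_add', div_mul_eq_mul_div, eq_div_iff hc]
    linear_combination (g.dv j).1 * h'
  · simp only [Prod.snd_add, Prod.smul_snd, smul_eq_mul]
    rw [← sub_eq_iff_eq_add', div_mul_eq_mul_div, eq_div_iff hc]
    linear_combination h' * (g.dv j).2

/-- A point on the line of the column `j` between two rows lies on the column itself, as the column
contains its crossings with these rows. -/
theorem mem_V_of (i₀ i₁ j : Fin 8) (hi : i₀ < i₁) {z : Pt} (h : g.R j z = 0)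
    (h0 : 0 ≤ g.U i₀ z) (h1 : g.U i₁ z ≤ 0) : z ∈ g.V j := by
  obtain ⟨r, rfl⟩ := g.exists_of_R i₀ j h
  rw [g.U_col] at h0 h1
  have ht := g.t_lt i₀ i₁ j hi
  have hr0 : 0 ≤ r := by
    have := nonneg_of_mul_nonneg_left h0 (g.D_pos i₀ j); linarith
  have hr1 : r ≤ g.t i₁ j - g.t i₀ j := by
    have := nonpos_of_mul_nonpos_left h1 (g.D_pos i₁ j); linarith
  have hpos : 0 < g.t i₁ j - g.t i₀ j := by linarith
  have : g.P i₀ j + r • g.dv j = g.P i₀ j +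
      (r / (g.t i₁ j - g.t i₀ j)) • (g.P i₁ j - g.P i₀ j) := by
    rw [g.P_sub_v i₀ i₁ j, add_sub_cancel_left, smul_smul, div_mul_cancel₀ _ hpos.ne']
  rw [this]
  exact add_smul_sub_mem (g.convex_V j) (g.P_mem_V _ _) (g.P_mem_V _ _) (by positivity)
    ((div_le_one hpos).2 hr1)

theorem mem_H_of (i j₀ j₁ : Fin 8) (hj : j₀ < j₁) {z : Pt} (h : g.U i z = 0)
    (h0 : 0 ≤ g.R j₀ z) (h1 : g.R j₁ z ≤ 0) : z ∈ g.H i := by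
  obtain ⟨r, rfl⟩ := g.exists_of_U i j₀ h
  rw [g.R_row] at h0 h1
  have ht := g.s_lt i j₀ j₁ hj
  have hr0 : 0 ≤ r := by
    have := nonneg_of_mul_nonneg_left h0 (g.D_pos i j₀); linarith
  have hr1 : r ≤ g.s i j₁ - g.s i j₀ := by
    have := nonpos_of_mul_nonpos_left h1 (g.D_pos i j₁); linarith
  have hpos : 0 < g.s i j₁ - g.s i j₀ := by linarith
  have : g.P i j₀ + r • g.dh i = g.P i j₀ +
      (r / (g.s i j₁ - g.s i j₀)) • (g.P i j₁ - g.P i j₀) := by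
    rw [g.P_sub_h i j₀ j₁, add_sub_cancel_left, smul_smul, div_mul_cancel₀ _ hpos.ne']
  rw [this]
  exact add_smul_sub_mem (g.convex_H i) (g.P_mem_H _ _) (g.P_mem_H _ _) (by positivity)
    ((div_le_one hpos).2 hr1)

/-- The open quadrilateral bounded by the rows `i₀`, `i₁` and the columns `j₀`, `j₁`. -/
def InQuad (i₀ i₁ j₀ j₁ : Fin 8) (z : Pt) : Prop :=
  0 < g.R j₀ z ∧ g.R j₁ z < 0 ∧ 0 < g.U i₀ z ∧ g.U i₁ z < 0

/-- A convex set that avoids the four sides of a grid quadrilateral and has a point inside it lies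
inside it. -/
theorem inQuad_of_mem {x : Set Pt} (cx : Convex ℝ x) {i₀ i₁ j₀ j₁ : Fin 8} (hi : i₀ < i₁)
    (hj : j₀ < j₁) (d1 : Disjoint x (g.V j₀)) (d2 : Disjoint x (g.V j₁))
    (d3 : Disjoint x (g.H i₀)) (d4 : Disjoint x (g.H i₁)) {A B : Pt} (hA : A ∈ x) (hB : B ∈ x)
    (h : g.InQuad i₀ i₁ j₀ j₁ A) : g.InQuad i₀ i₁ j₀ j₁ B := by
  by_contra hcon
  obtain ⟨a1, a2, a3, a4⟩ := h
  obtain ⟨θ, h0, h1, hpos, k, hk⟩ := exists_exit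
    ![g.R j₀, fun z => -g.R j₁ z, g.U i₀, fun z => -g.U i₁ z]
    (by
      intro k A B θ
      fin_cases k
      · exact g.R_affine _ _ _ _
      · show -g.R j₁ _ = -g.R j₁ A + θ * (-g.R j₁ B - -g.R j₁ A)
        rw [g.R_affine]; ring
      · exact g.U_affine _ _ _ _
      · show -g.U i₁ _ = -g.U i₁ A + θ * (-g.U i₁ B - -g.U i₁ A)
        rw [g.U_affine]; ring) (A := A) (B := B)
    (by
      intro k
      fin_cases k
      exacts [a1, neg_pos.2 a2, a3, neg_pos.2 a4])
    (by
      by_contra hno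
      push Not at hno
      exact hcon ⟨hno 0, neg_pos.1 (hno 1), hno 2, neg_pos.1 (hno 3)⟩)
  have hmem := add_smul_sub_mem cx hA hB h0 h1
  have p0 : 0 ≤ g.R j₀ _ := hpos 0
  have p1 : g.R j₁ _ ≤ 0 := neg_nonneg.1 (hpos 1)
  have p2 : 0 ≤ g.U i₀ _ := hpos 2
  have p3 : g.U i₁ _ ≤ 0 := neg_nonneg.1 (hpos 3)
  fin_cases k
  · exact d1.le_bot ⟨hmem, g.mem_V_of _ _ _ hi hk p2 p3⟩
  · exact d2.le_bot ⟨hmem, g.mem_V_of _ _ _ hi (neg_eq_zero.1 hk) p2 p3⟩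
  · exact d3.le_bot ⟨hmem, g.mem_H_of _ _ _ hj hk p0 p1⟩
  · exact d4.le_bot ⟨hmem, g.mem_H_of _ _ _ hj (neg_eq_zero.1 hk) p0 p1⟩

/-- A mark `x i j` whose point `Y` overshoots the column `j'` cuts off, together with its row and
column, a triangle that `V j'` enters. If the row `i'` crosses the column `j` on the side opposite to
`X i j`, and `X i' j'` lies on the side of the row `i` on which `X i j` lies, then the path from
`P i j'` along `V j'`, the mark `x i' j'` and the row `H i'` is impossible by `triangle_conflict`. -/
theorem nonlocal_conflict (i i' j j' : Fin 8) (hi : i ≠ i') (hj : j ≠ j')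
    (h1 : 0 < (g.σ i j - g.s i j') * (g.s i j' - g.s i j))
    (h2 : 0 < (g.τ i' j' - g.t i j') * (g.τ i j - g.t i j))
    (h3 : (g.t i' j - g.t i j) * (g.τ i j - g.t i j) < 0) : False := by
  set η := g.σ i j - g.s i j with hη
  set ξ := g.τ i j - g.t i j with hξ
  have eY : g.Y i j - g.P i j = η • g.dh i := by rw [g.Y_eq, g.P_eq_h]; module
  have eX : g.X i j - g.P i j = ξ • g.dv j := by rw [g.X_eq, g.P_eq_v]; module
  have ξ0 : ξ ≠ 0 := by rintro h; simp [h] at h3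
  have hc : 0 < (g.s i j' - g.s i j) / η ∧ (g.s i j' - g.s i j) / η < 1 := by
    rcases pos_and_pos_or_neg_and_neg_of_mul_pos h1 with ⟨ha, hb⟩ | ⟨ha, hb⟩
    · have : 0 < η := by linarith
      exact ⟨by positivity, by rw [div_lt_one this]; linarith⟩
    · have : η < 0 := by linarith
      exact ⟨div_pos_of_neg_of_neg hb this, by rw [div_lt_one_of_neg this]; linarith⟩
  have η0 : η ≠ 0 := by rintro h; simp [h] at hc
  have hD := g.D_pos i j
  have hD' := g.D_pos i j'
  have eD : cross (g.Y i j - g.P i j) (g.X i j - g.P i j) = η * ξ * cross (g.dh i) (g.dv j) := by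
    rw [eY, eX]; simp [cross]; ring
  have hc0 : cross (g.dh i) (g.dv j) ≠ 0 := by rintro h0; simp [h0] at hD
  have hκ : g.κ ≠ 0 := by rintro h0; simp [h0] at hD
  have eX' : cross (g.Y i j - g.P i j) (g.X i' j' - g.P i j) =
      η * (g.τ i' j' - g.t i j') * cross (g.dh i) (g.dv j') := by
    have : g.X i' j' - g.P i j = (g.s i j' - g.s i j) • g.dh i +
        (g.τ i' j' - g.t i j') • g.dv j' := by
      have e := g.P_sub_h i j j'
      rw [g.P_eq_v i j'] at e
      rw [g.X_eq]
      have e' : g.ov j' + g.τ i' j' • g.dv j' - g.P i j =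
          (g.ov j' + g.t i j' • g.dv j') - g.P i j + (g.τ i' j' - g.t i j') • g.dv j' := by
        module
      rw [e', e]; module
    rw [this, eY]; simp [cross]; ring
  refine triangle_conflict (g.convex_V j) (g.convex_V j') (g.convex_H i) (g.convex_H i')
    (g.convex_x i j) (g.convex_x i' j') (g.disj_VV _ _ hj) (g.disj_HH _ _ hi)
    (g.disj_xx _ _ _ _ hi) (g.disj_xV _ _ _ hj) (g.disj_xH _ _ _ hi)
    (g.disj_xV _ _ _ hj.symm) (g.disj_xH _ _ _ hi.symm) (p := g.P i j) (X := g.X i j)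
    (Y := g.Y i j) (q := g.P i j') (X' := g.X i' j') (Y' := g.Y i' j') (r := g.P i' j)
    (g.P_mem_V _ _) (g.X_mem_V _ _) (g.P_mem_H _ _) (g.Y_mem_H _ _) (g.X_mem_x _ _)
    (g.Y_mem_x _ _) (g.P_mem_V _ _) (g.X_mem_V _ _) (g.X_mem_x _ _) (g.Y_mem_x _ _)
    (g.Y_mem_H _ _) (g.P_mem_H _ _) ?_ (c := (g.s i j' - g.s i j) / η)
    (ρ := -((g.t i' j - g.t i j) / ξ)) ?_ hc.1 hc.2 ?_ ?_ ?_
  · rw [eD]; positivity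
  · rw [eY, smul_smul, div_mul_cancel₀ _ η0]; exact g.P_sub_h i j j'
  · rw [eD, eX']
    have : η * (g.τ i' j' - g.t i j') * cross (g.dh i) (g.dv j') /
        (η * ξ * cross (g.dh i) (g.dv j)) = ((g.τ i' j' - g.t i j') * ξ *
        ((g.κ * cross (g.dh i) (g.dv j')) * (g.κ * cross (g.dh i) (g.dv j)))) /
        (ξ * (g.κ * cross (g.dh i) (g.dv j))) ^ 2 := by
      field_simp
    rw [this]; positivity
  · rw [eX, smul_smul, neg_mul, div_mul_cancel₀ _ ξ0, neg_smul, sub_neg_eq_add]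
    exact g.P_sub_v i i' j
  · have : (g.t i' j - g.t i j) / ξ = (g.t i' j - g.t i j) * ξ / ξ ^ 2 := by field_simp
    rw [this, ← neg_div, neg_eq_neg_one_mul]
    have : 0 < ξ ^ 2 := by positivity
    apply div_pos _ this
    linarith

/-- Either every `X i j` lies between the neighbouring rows on its column, or every `Y i j` lies
between the neighbouring columns on its row: otherwise both overshoot uniformly, contradicting
`nonlocal_conflict`. -/
theorem local_X_or_Y :
    ((∀ i i' j, i < i' → g.τ i j < g.t i' j) ∧ (∀ i i' j, i < i' → g.t i j < g.τ i' j)) ∨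
    ((∀ i j j', j < j' → g.σ i j < g.s i j') ∧ (∀ i j j', j < j' → g.s i j < g.σ i j')) := by
  -- `up`, `down`: no row has overshooting points `Y` if all `X` overshoot upwards, or downwards
  have up (h : ∀ i i' j, i < i' → g.t i' j < g.τ i j) (j j' : Fin 8) (hj : j ≠ j')
      (h1 : 0 < (g.σ 2 j - g.s 2 j') * (g.s 2 j' - g.s 2 j)) : False := by
    have a := h 2 3 j (by decide)
    have b := g.t_lt 2 3 j (by decide)
    have c := h 1 2 j' (by decide)
    have d := g.t_lt 1 2 j (by decide)
    exact g.nonlocal_conflict 2 1 j j' (by decide) hj h1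
      (mul_pos (by linarith) (by linarith)) (mul_neg_of_neg_of_pos (by linarith) (by linarith))
  have down (h : ∀ i i' j, i < i' → g.τ i' j < g.t i j) (j j' : Fin 8) (hj : j ≠ j')
      (h1 : 0 < (g.σ 1 j - g.s 1 j') * (g.s 1 j' - g.s 1 j)) : False := by
    have a := h 0 1 j (by decide)
    have b := g.t_lt 0 1 j (by decide)
    have c := h 1 2 j' (by decide)
    have d := g.t_lt 1 2 j (by decide)
    exact g.nonlocal_conflict 1 2 j j' (by decide) hj h1
      (mul_pos_of_neg_of_neg (by linarith) (by linarith))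
      (mul_neg_of_pos_of_neg (by linarith) (by linarith))
  have right (h : ∀ i j j', j < j' → g.s i j' < g.σ i j) (i : Fin 8) :
      0 < (g.σ i 1 - g.s i 2) * (g.s i 2 - g.s i 1) :=
    mul_pos (sub_pos.2 (h i 1 2 (by decide))) (sub_pos.2 (g.s_lt i 1 2 (by decide)))
  have left (h : ∀ i j j', j < j' → g.σ i j' < g.s i j) (i : Fin 8) :
      0 < (g.σ i 2 - g.s i 1) * (g.s i 1 - g.s i 2) :=
    mul_pos_of_neg_of_neg (sub_neg.2 (h i 1 2 (by decide)))
      (sub_neg.2 (g.s_lt i 1 2 (by decide)))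
  rcases g.right with hr | hr
  · rcases g.up with hu | hu
    · exact (up hu 1 2 (by decide) (right hr 2)).elim
    rcases g.down with hd | hd
    · exact (down hd 1 2 (by decide) (right hr 1)).elim
    exact Or.inl ⟨hu, hd⟩
  rcases g.left with hl | hl
  · rcases g.up with hu | hu
    · exact (up hu 2 1 (by decide) (left hl 2)).elim
    rcases g.down with hd | hd
    · exact (down hd 2 1 (by decide) (left hl 1)).elim
    exact Or.inl ⟨hu, hd⟩
  exact Or.inr ⟨hr, hl⟩

theorem R_P_pos (i : Fin 8) {j j' : Fin 8} (h : j < j') : 0 < g.R j (g.P i j') := by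
  have := g.R_row i j j' 0
  simp only [zero_smul, add_zero] at this
  rw [this]
  exact mul_pos (sub_pos.2 (g.s_lt i _ _ h)) (g.D_pos _ _)

theorem R_P_neg (i : Fin 8) {j j' : Fin 8} (h : j' < j) : g.R j (g.P i j') < 0 := by
  have := g.R_row i j j' 0
  simp only [zero_smul, add_zero] at this
  rw [this]
  exact mul_neg_of_neg_of_pos (sub_neg.2 (g.s_lt i _ _ h)) (g.D_pos _ _)

theorem U_P_pos (j : Fin 8) {i i' : Fin 8} (h : i < i') : 0 < g.U i (g.P i' j) := by
  have := g.U_col i i' j 0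
  simp only [zero_smul, add_zero] at this
  rw [this]
  exact mul_pos (sub_pos.2 (g.t_lt _ _ j h)) (g.D_pos _ _)

theorem U_P_neg (j : Fin 8) {i i' : Fin 8} (h : i' < i) : g.U i (g.P i' j) < 0 := by
  have := g.U_col i i' j 0
  simp only [zero_smul, add_zero] at this
  rw [this]
  exact mul_neg_of_neg_of_pos (sub_neg.2 (g.t_lt _ _ j h)) (g.D_pos _ _)

/-- Every mark is trapped between any earlier and later rows and columns. -/
theorem mark_inQuad {i i₀ i₁ j j₀ j₁ : Fin 8} (hi0 : i₀ < i) (hi1 : i < i₁) (hj0 : j₀ < j)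
    (hj1 : j < j₁) {z : Pt} (hz : z ∈ g.x i j) : g.InQuad i₀ i₁ j₀ j₁ z := by
  have key {A : Pt} (hA : A ∈ g.x i j) (h : g.InQuad i₀ i₁ j₀ j₁ A) : g.InQuad i₀ i₁ j₀ j₁ z :=
    g.inQuad_of_mem (g.convex_x i j) (hi0.trans hi1) (hj0.trans hj1)
      (g.disj_xV _ _ _ hj0.ne') (g.disj_xV _ _ _ hj1.ne) (g.disj_xH _ _ _ hi0.ne')
      (g.disj_xH _ _ _ hi1.ne) hA hz h
  rcases g.local_X_or_Y with ⟨h1, h2⟩ | ⟨h1, h2⟩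
  · refine key (g.X_mem_x i j) ?_
    have a := h1 i i₁ j hi1
    have b := h2 i₀ i j hi0
    have hpos : 0 < g.t i₁ j - g.t i₀ j := by linarith
    set θ := (g.τ i j - g.t i₀ j) / (g.t i₁ j - g.t i₀ j) with hθ
    have θ0 : 0 < θ := div_pos (by linarith) hpos
    have θ1 : θ < 1 := (div_lt_one hpos).2 (by linarith)
    have e : g.X i j = g.P i₀ j + θ • (g.P i₁ j - g.P i₀ j) := by
      rw [g.P_sub_v i₀ i₁ j, add_sub_cancel_left, smul_smul, hθ, div_mul_cancel₀ _ hpos.ne',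
        g.X_eq, g.P_eq_v]
      module
    have e' : g.X i j = g.P i₀ j + (g.τ i j - g.t i₀ j) • g.dv j := by
      rw [g.X_eq, g.P_eq_v]; module
    refine ⟨?_, ?_, ?_, ?_⟩
    · rw [e, g.R_affine]
      have := g.R_P_pos i₀ hj0
      have := g.R_P_pos i₁ hj0
      nlinarith
    · rw [e, g.R_affine]
      have := g.R_P_neg i₀ hj1
      have := g.R_P_neg i₁ hj1
      nlinarith
    · rw [e', g.U_col]; exact mul_pos (by linarith) (g.D_pos _ _)
    · rw [e', g.U_col]; exact mul_neg_of_neg_of_pos (by linarith) (g.D_pos _ _)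
  · refine key (g.Y_mem_x i j) ?_
    have a := h1 i j j₁ hj1
    have b := h2 i j₀ j hj0
    have hpos : 0 < g.s i j₁ - g.s i j₀ := by linarith
    set θ := (g.σ i j - g.s i j₀) / (g.s i j₁ - g.s i j₀) with hθ
    have θ0 : 0 < θ := div_pos (by linarith) hpos
    have θ1 : θ < 1 := (div_lt_one hpos).2 (by linarith)
    have e : g.Y i j = g.P i j₀ + θ • (g.P i j₁ - g.P i j₀) := by
      rw [g.P_sub_h i j₀ j₁, add_sub_cancel_left, smul_smul, hθ, div_mul_cancel₀ _ hpos.ne',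
        g.Y_eq, g.P_eq_h]
      module
    have e' : g.Y i j = g.P i j₀ + (g.σ i j - g.s i j₀) • g.dh i := by
      rw [g.Y_eq, g.P_eq_h]; module
    refine ⟨?_, ?_, ?_, ?_⟩
    · rw [e', g.R_row]; exact mul_pos (by linarith) (g.D_pos _ _)
    · rw [e', g.R_row]; exact mul_neg_of_neg_of_pos (by linarith) (g.D_pos _ _)
    · rw [e, g.U_affine]
      have := g.U_P_pos j₀ hi0
      have := g.U_P_pos j₁ hi0
      nlinarith
    · rw [e, g.U_affine]
      have := g.U_P_neg j₀ hi1
      have := g.U_P_neg j₁ hi1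
      nlinarith

theorem δ_pos_of_U5 {z : Pt} (h : g.U 5 z = 0) (h' : 0 < g.R 2 z) : 0 < g.δ z := by
  obtain ⟨r, rfl⟩ := g.exists_of_U 5 2 h
  rw [g.R_row, sub_self, zero_add] at h'
  have hr := pos_of_mul_pos_left h' (g.D_pos 5 2).le
  have e : g.δ (g.P 5 2 + r • g.dh 5) =
      r * (g.t 5 5 - g.t 2 5) * (g.κ * cross (g.dh 5) (g.dv 5)) := by
    have : g.P 2 5 - g.P 5 2 =
        (g.s 5 5 - g.s 5 2) • g.dh 5 - (g.t 5 5 - g.t 2 5) • g.dv 5 := by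
      rw [g.P_sub_v 5 2 5, g.P_sub_h 5 2 5]; module
    rw [δ, this]; simp [cross]; ring
  rw [e]
  exact mul_pos (mul_pos hr (sub_pos.2 (g.t_lt 2 5 5 (by decide)))) (g.D_pos _ _)

theorem δ_pos_of_R5 {z : Pt} (h : g.R 5 z = 0) (h' : 0 < g.U 2 z) : 0 < g.δ z := by
  obtain ⟨r, rfl⟩ := g.exists_of_R 2 5 h
  rw [g.U_col, sub_self, zero_add] at h'
  have hr := pos_of_mul_pos_left h' (g.D_pos 2 5).le
  have e : g.δ (g.P 2 5 + r • g.dv 5) =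
      r * (g.s 5 5 - g.s 5 2) * (g.κ * cross (g.dh 5) (g.dv 5)) := by
    have e1 : g.P 2 5 + r • g.dv 5 - g.P 5 2 = (g.P 2 5 - g.P 5 2) + r • g.dv 5 := by abel
    have : g.P 2 5 - g.P 5 2 =
        (g.s 5 5 - g.s 5 2) • g.dh 5 - (g.t 5 5 - g.t 2 5) • g.dv 5 := by
      rw [g.P_sub_v 5 2 5, g.P_sub_h 5 2 5]; module
    rw [δ, e1, this]; simp [cross]; ring
  rw [e]
  exact mul_pos (mul_pos hr (sub_pos.2 (g.s_lt 5 2 5 (by decide)))) (g.D_pos _ _)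

theorem δ_neg_of_R2 {z : Pt} (h : g.R 2 z = 0) (h' : g.U 5 z < 0) : g.δ z < 0 := by
  obtain ⟨r, rfl⟩ := g.exists_of_R 5 2 h
  rw [g.U_col, sub_self, zero_add] at h'
  have hr := neg_of_mul_neg_left h' (g.D_pos 5 2).le
  have e : g.δ (g.P 5 2 + r • g.dv 2) =
      r * (g.s 2 5 - g.s 2 2) * (g.κ * cross (g.dh 2) (g.dv 2)) := by
    have : g.P 2 5 - g.P 5 2 =
        (g.s 2 5 - g.s 2 2) • g.dh 2 - (g.t 5 2 - g.t 2 2) • g.dv 2 := by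
      rw [g.P_sub_h 2 2 5, g.P_sub_v 2 5 2]; module
    rw [δ, this]; simp [cross]; ring
  rw [e]
  exact mul_neg_of_neg_of_pos
    (mul_neg_of_neg_of_pos hr (sub_pos.2 (g.s_lt 2 2 5 (by decide)))) (g.D_pos _ _)

theorem δ_neg_of_U2 {z : Pt} (h : g.U 2 z = 0) (h' : g.R 5 z < 0) : g.δ z < 0 := by
  obtain ⟨r, rfl⟩ := g.exists_of_U 2 5 h
  rw [g.R_row, sub_self, zero_add] at h'
  have hr := neg_of_mul_neg_left h' (g.D_pos 2 5).le
  have e : g.δ (g.P 2 5 + r • g.dh 2) =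
      r * (g.t 5 2 - g.t 2 2) * (g.κ * cross (g.dh 2) (g.dv 2)) := by
    have e1 : g.P 2 5 + r • g.dh 2 - g.P 5 2 = (g.P 2 5 - g.P 5 2) + r • g.dh 2 := by abel
    have : g.P 2 5 - g.P 5 2 =
        (g.s 2 5 - g.s 2 2) • g.dh 2 - (g.t 5 2 - g.t 2 2) • g.dv 2 := by
      rw [g.P_sub_h 2 2 5, g.P_sub_v 2 5 2]; module
    rw [δ, e1, this]; simp [cross]; ring
  rw [e]
  exact mul_neg_of_neg_of_pos
    (mul_neg_of_neg_of_pos hr (sub_pos.2 (g.t_lt 2 5 2 (by decide)))) (g.D_pos _ _)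

end CleanGrid

/-- An affine function on `[0, 1]` that changes sign has a zero in the interior. -/
theorem exists_zero_between {a b : ℝ} (ha : a < 0) (hb : 0 < b) :
    ∃ l : ℝ, 0 < l ∧ l < 1 ∧ a + l * (b - a) = 0 :=
  ⟨-a / (b - a), div_pos (by linarith) (by linarith), (div_lt_one (by linarith)).2 (by linarith),
    by rw [div_mul_cancel₀ _ (by linarith)]; ring⟩

/-- Of three collinear points, one lies on the segment spanned by the other two. -/
theorem exists_affine_between {A B p : Pt} (h : Collinear ℝ ({A, B, p} : Set Pt)) :
    (∃ θ : ℝ, 0 ≤ θ ∧ θ ≤ 1 ∧ p = A + θ • (B - A)) ∨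
    (∃ θ : ℝ, 0 ≤ θ ∧ θ ≤ 1 ∧ A = p + θ • (B - p)) ∨
    (∃ θ : ℝ, 0 ≤ θ ∧ θ ≤ 1 ∧ B = A + θ • (p - A)) := by
  rcases h.wbtw_or_wbtw_or_wbtw with ⟨θ, ⟨h0, h1⟩, h⟩ | ⟨θ, ⟨h0, h1⟩, h⟩ | ⟨θ, ⟨h0, h1⟩, h⟩
  · refine Or.inr (Or.inr ⟨θ, h0, h1, ?_⟩)
    rw [← h, AffineMap.lineMap_apply, vsub_eq_sub, vadd_eq_add, add_comm]
  · refine Or.inl ⟨1 - θ, by linarith, by linarith, ?_⟩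
    rw [← h, AffineMap.lineMap_apply, vsub_eq_sub, vadd_eq_add]; module
  · refine Or.inr (Or.inl ⟨θ, h0, h1, ?_⟩)
    rw [← h, AffineMap.lineMap_apply, vsub_eq_sub, vadd_eq_add, add_comm]

/-- If `A`, `B`, `p` are collinear, `u` separates `A` from `p` and `B`, and `r` separates `B` from `p`
and `A`, then `p` lies between `A` and `B`. So an affine `f` that is positive where the segment `pA`
crosses `u = 0` and where `pB` crosses `r = 0` is positive at `p`. -/
theorem pos_between {f u r : Pt → ℝ}
    (hf : ∀ (A B : Pt) (θ : ℝ), f (A + θ • (B - A)) = f A + θ * (f B - f A))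
    (hu : ∀ (A B : Pt) (θ : ℝ), u (A + θ • (B - A)) = u A + θ * (u B - u A))
    (hr : ∀ (A B : Pt) (θ : ℝ), r (A + θ • (B - A)) = r A + θ * (r B - r A))
    {A B p : Pt} (hcol : Collinear ℝ ({A, B, p} : Set Pt))
    (uA : 0 < u A) (up : u p < 0) (uB : u B < 0) (rA : r A < 0) (rp : r p < 0) (rB : 0 < r B)
    (h1 : ∀ l : ℝ, 0 < l → l < 1 → u (p + l • (A - p)) = 0 → 0 < f (p + l • (A - p)))
    (h2 : ∀ l : ℝ, 0 < l → l < 1 → r (p + l • (B - p)) = 0 → 0 < f (p + l • (B - p))) :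
    0 < f p := by
  obtain ⟨l, l0, l1, hl⟩ := exists_zero_between up uA
  obtain ⟨m, m0, m1, hm⟩ := exists_zero_between rp rB
  have k1 := h1 l l0 l1 (by rw [hu, hl])
  have k2 := h2 m m0 m1 (by rw [hr, hm])
  rw [hf] at k1 k2
  rcases exists_affine_between hcol with ⟨θ, t0, t1, h⟩ | ⟨θ, t0, t1, h⟩ | ⟨θ, t0, t1, h⟩
  · have e := hf A B θ
    rw [← h] at e
    have e1 : f A - f p = -(θ * (f B - f A)) := by linarith
    have e2 : f B - f p = (1 - θ) * (f B - f A) := by linarith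
    rw [e1] at k1
    rw [e2] at k2
    rcases le_total 0 (f B - f A) with hd | hd
    · have : 0 ≤ l * (θ * (f B - f A)) := by positivity
      linarith
    · have : 0 ≤ m * ((1 - θ) * (-(f B - f A))) :=
        mul_nonneg m0.le (mul_nonneg (by linarith) (by linarith))
      linarith
  · have e := hu p B θ
    rw [← h] at e
    nlinarith
  · have e := hr A p θ
    rw [← h] at e
    nlinarith

/-- The core geometric contradiction. The straight sets `L` and `S` have a common point `p`, which
lies in the quadrilateral spanned by the rows and columns `2` and `5`. On both sides of `p`, the set
`L` leaves this quadrilateral through its top and right sides, so `p` lies above the diagonal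
`P 5 2`, `P 2 5`, whereas `S` leaves through the left and bottom sides, so `p` lies below it. -/
theorem CleanGrid.false_of_L_seven (g : CleanGrid) {L S : Set Pt} (cL : Convex ℝ L)
    (cS : Convex ℝ S) (lL : Collinear ℝ L) (lS : Collinear ℝ S)
    (hLS : (L ∩ S).Nonempty) (hA : (L ∩ g.x 6 3).Nonempty) (hB : (L ∩ g.x 3 6).Nonempty)
    (hC : (S ∩ g.x 4 1).Nonempty) (hE : (S ∩ g.x 1 4).Nonempty)
    (L1 : Disjoint L (g.V 2)) (L2 : Disjoint L (g.V 7)) (L3 : Disjoint L (g.H 2))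
    (L4 : Disjoint L (g.H 7)) (S1 : Disjoint S (g.V 0)) (S2 : Disjoint S (g.V 5))
    (S3 : Disjoint S (g.H 0)) (S4 : Disjoint S (g.H 5)) : False := by
  obtain ⟨p, pL, pS⟩ := hLS
  obtain ⟨A, AL, Ax⟩ := hA
  obtain ⟨B, BL, Bx⟩ := hB
  obtain ⟨C, CS, Cx⟩ := hC
  obtain ⟨E, ES, Ex⟩ := hE
  have qA := g.mark_inQuad (i₀ := 2) (i₁ := 7) (j₀ := 2) (j₁ := 7) (by decide) (by decide)
    (by decide) (by decide) Ax
  have qA' := g.mark_inQuad (i₀ := 5) (i₁ := 7) (j₀ := 2) (j₁ := 5) (by decide) (by decide)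
    (by decide) (by decide) Ax
  have qB := g.mark_inQuad (i₀ := 2) (i₁ := 5) (j₀ := 5) (j₁ := 7) (by decide) (by decide)
    (by decide) (by decide) Bx
  have qC := g.mark_inQuad (i₀ := 2) (i₁ := 5) (j₀ := 0) (j₁ := 2) (by decide) (by decide)
    (by decide) (by decide) Cx
  have qC' := g.mark_inQuad (i₀ := 0) (i₁ := 5) (j₀ := 0) (j₁ := 5) (by decide) (by decide)
    (by decide) (by decide) Cx
  have qE := g.mark_inQuad (i₀ := 0) (i₁ := 2) (j₀ := 2) (j₁ := 5) (by decide) (by decide)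
    (by decide) (by decide) Ex
  have qp := g.inQuad_of_mem cL (by decide) (by decide) L1 L2 L3 L4 AL pL qA
  have qp' := g.inQuad_of_mem cS (by decide) (by decide) S1 S2 S3 S4 CS pS qC'
  have uE : g.U 5 E < 0 := by
    exact (g.mark_inQuad (i₀ := 0) (i₁ := 5) (j₀ := 2) (j₁ := 5) (by decide) (by decide)
      (by decide) (by decide) Ex).2.2.2
  have uB : 0 < g.R 2 B := by
    exact (g.mark_inQuad (i₀ := 2) (i₁ := 5) (j₀ := 2) (j₁ := 7) (by decide) (by decide)
      (by decide) (by decide) Bx).1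
  obtain ⟨a1, a2, a3, a4⟩ := qA
  obtain ⟨a1', a2', a3', a4'⟩ := qA'
  obtain ⟨b1, b2, b3, b4⟩ := qB
  obtain ⟨c1, c2, c3, c4⟩ := qC
  obtain ⟨c1', c2', c3', c4'⟩ := qC'
  obtain ⟨e1, e2, e3, e4⟩ := qE
  obtain ⟨p1, p2, p3, p4⟩ := qp
  obtain ⟨p1', p2', p3', p4'⟩ := qp'
  have pos : 0 < g.δ p := by
    refine pos_between g.δ_affine (g.U_affine 5) (g.R_affine 5) (A := A) (B := B)
      (lL.subset ?_) a3' p4' b4 a2' p2' b1 ?_ ?_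
    · rintro z (rfl | rfl | rfl) <;> assumption
    · intro l l0 l1 h
      refine g.δ_pos_of_U5 h ?_
      rw [g.R_affine]; nlinarith
    · intro l l0 l1 h
      refine g.δ_pos_of_R5 h ?_
      rw [g.U_affine]; nlinarith
  have neg : 0 < -g.δ p := by
    refine pos_between (f := fun z => -g.δ z) (u := fun z => -g.R 2 z) (r := fun z => -g.U 2 z)
      ?_ ?_ ?_ (A := C) (B := E)
      (lS.subset ?_) (neg_pos.2 c2) (neg_lt_zero.2 p1) (neg_lt_zero.2 e1) (neg_lt_zero.2 c3)
      (neg_lt_zero.2 p3) (neg_pos.2 e4) ?_ ?_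
    · intro A B θ; simp only [g.δ_affine]; ring
    · intro A B θ; simp only [g.R_affine]; ring
    · intro A B θ; simp only [g.U_affine]; ring
    · rintro z (rfl | rfl | rfl) <;> assumption
    · intro l l0 l1 h
      refine neg_pos.2 (g.δ_neg_of_R2 (neg_eq_zero.1 h) ?_)
      rw [g.U_affine]; nlinarith
    · intro l l0 l1 h
      refine neg_pos.2 (g.δ_neg_of_U2 (neg_eq_zero.1 h) ?_)
      rw [g.R_affine]; nlinarith
  linarith

/-! ### Segment grids contain uniform grids -/

/-- Four reals arranged in a `2 × 2` array: the intervals spanned by the two rows meet, or those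
spanned by the two columns do. -/
theorem exists_common_point (a b c d : ℝ) :
    (∃ x, x ∈ uIcc a b ∧ x ∈ uIcc c d) ∨ (∃ x, x ∈ uIcc a c ∧ x ∈ uIcc b d) := by
  simp only [uIcc, mem_Icc]
  rcases lt_or_ge (max a b) (min c d) with h | h
  · exact Or.inr ⟨max a b, by grind, by grind⟩
  rcases lt_or_ge (max c d) (min a b) with h' | h'
  · exact Or.inr ⟨max c d, by grind, by grind⟩
  exact Or.inl ⟨max (min a b) (min c d), by grind, by grind⟩

/-- Two disjoint rows and two disjoint columns cannot have all four crossings on one line: a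
four-cycle is not an interval graph. -/
theorem false_of_collinear_cycle {h h' v v' : Set Pt} (ch : Convex ℝ h) (ch' : Convex ℝ h')
    (cv : Convex ℝ v) (cv' : Convex ℝ v') (dh : Disjoint h h') (dv : Disjoint v v')
    {o e : Pt} {a b c d : ℝ} (ah : o + a • e ∈ h) (av : o + a • e ∈ v)
    (bh : o + b • e ∈ h) (bv : o + b • e ∈ v') (hc : o + c • e ∈ h') (cv₁ : o + c • e ∈ v)
    (hd : o + d • e ∈ h') (dv₁ : o + d • e ∈ v') : False := by
  have key {C : Set Pt} (hC : Convex ℝ C) {p q r : ℝ} (hp : o + p • e ∈ C) (hq : o + q • e ∈ C)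
      (hr : r ∈ uIcc p q) : o + r • e ∈ C := by
    rw [← segment_eq_uIcc, segment_eq_image'] at hr
    obtain ⟨θ, ⟨h0, h1⟩, rfl⟩ := hr
    have := add_smul_sub_mem hC hp hq h0 h1
    convert this using 1
    simp only [smul_eq_mul]
    module
  rcases exists_common_point a b c d with ⟨x, hx, hx'⟩ | ⟨x, hx, hx'⟩
  · exact dh.le_bot ⟨key ch ah bh hx, key ch' hc hd hx'⟩
  · exact dv.le_bot ⟨key cv av cv₁ hx, key cv' bv dv₁ hx'⟩

theorem exists_smul_of_cross_eq_zero {u w : Pt} (hu : u ≠ 0) (h : cross u w = 0) :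
    ∃ r : ℝ, w = r • u := by
  have hn : 0 < u.1 ^ 2 + u.2 ^ 2 := by
    rcases eq_or_ne u.1 0 with h1 | h1
    · have : u.2 ≠ 0 := fun h2 => hu (Prod.ext h1 h2)
      positivity
    · positivity
  unfold cross at h
  refine ⟨(u.1 * w.1 + u.2 * w.2) / (u.1 ^ 2 + u.2 ^ 2), ?_⟩
  ext
  · rw [Prod.smul_fst, smul_eq_mul, div_mul_eq_mul_div, eq_div_iff hn.ne']
    linear_combination -u.2 * h
  · rw [Prod.smul_snd, smul_eq_mul, div_mul_eq_mul_div, eq_div_iff hn.ne']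
    linear_combination u.1 * h

/-- Reals of common sign `c`, when nonzero, become positive on multiplication by a common
`ε = ±1`. -/
theorem exists_unit_of_sign (c : SignType) : ∃ ε : ℝ, (ε = 1 ∨ ε = -1) ∧
    ∀ x : ℝ, SignType.sign x = c → x ≠ 0 → 0 < ε * x := by
  cases c with
  | zero => exact ⟨1, Or.inl rfl, fun x h hx => absurd (sign_eq_zero_iff.1 h) hx⟩
  | neg => exact ⟨-1, Or.inr rfl, fun x h _ => by linarith [sign_eq_neg_one_iff.1 h]⟩
  | pos => exact ⟨1, Or.inl rfl, fun x h _ => by linarith [sign_eq_one_iff.1 h]⟩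

/-- The closed segment with the given pair of endpoints, possibly degenerate. -/
def seg (p : Pt × Pt) : Set Pt := segment ℝ p.1 p.2

theorem convex_seg (p : Pt × Pt) : Convex ℝ (seg p) := convex_segment _ _

theorem exists_param {p : Pt × Pt} {z : Pt} (h : z ∈ seg p) :
    ∃ θ : ℝ, z = p.1 + θ • (p.2 - p.1) := by
  rw [seg, segment_eq_image'] at h
  obtain ⟨θ, -, rfl⟩ := h
  exact ⟨θ, rfl⟩

/-- The intersection pattern of an `N × N` grid of segments with marks: columns `vs`, rows `hs`,
and for each cell a mark `xs i j` meeting its own row and column only. Marks from different rows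
are disjoint. -/
structure RawGrid (N : ℕ) (vs hs : ℕ → Pt × Pt) (xs : ℕ → ℕ → Pt × Pt) : Prop where
  vv : ∀ j < N, ∀ j' < N, j ≠ j' → Disjoint (seg (vs j)) (seg (vs j'))
  hh : ∀ i < N, ∀ i' < N, i ≠ i' → Disjoint (seg (hs i)) (seg (hs i'))
  xx : ∀ i < N, ∀ j < N, ∀ i' < N, ∀ j' < N, i ≠ i' →
    Disjoint (seg (xs i j)) (seg (xs i' j'))
  xv : ∀ i < N, ∀ j < N, ∀ j' < N, j ≠ j' → Disjoint (seg (xs i j)) (seg (vs j'))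
  xh : ∀ i < N, ∀ j < N, ∀ i' < N, i ≠ i' → Disjoint (seg (xs i j)) (seg (hs i'))
  hv : ∀ i < N, ∀ j < N, (seg (hs i) ∩ seg (vs j)).Nonempty
  xv_self : ∀ i < N, ∀ j < N, (seg (xs i j) ∩ seg (vs j)).Nonempty
  xh_self : ∀ i < N, ∀ j < N, (seg (xs i j) ∩ seg (hs i)).Nonempty

/-- By Ramsey, a large enough grid of segments contains an `8 × 8` subgrid in uniform position.
Nonparallelism comes from `false_of_collinear_cycle`; the other signs are nonzero because the
sets concerned are disjoint. -/
theorem exists_cleanGrid : ∃ N : ℕ, ∀ (vs hs : ℕ → Pt × Pt) (xs : ℕ → ℕ → Pt × Pt),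
    RawGrid N vs hs xs → ∃ (g : CleanGrid) (f k : Fin 8 → ℕ), StrictMono f ∧ StrictMono k ∧
      (∀ i, f i < N) ∧ (∀ j, k j < N) ∧ (g.V = fun j => seg (vs (k j))) ∧
      (g.H = fun i => seg (hs (f i))) ∧ (g.x = fun i j => seg (xs (f i) (k j))) := by
  -- one extra row and column, so that every index of the `8 × 8` subgrid is the smaller element
  -- of a pair and the colours cover it
  obtain ⟨N, hN⟩ := ramsey_grid (SignType × SignType × SignType × SignType × SignType ×
    SignType × SignType) 9
  refine ⟨N, fun vs hs xs G => ?_⟩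
  let eh : ℕ → Pt := fun i => (hs i).2 - (hs i).1
  let ev : ℕ → Pt := fun j => (vs j).2 - (vs j).1
  have hex : ∀ i j : ℕ, ∃ s t σ τ : ℝ, i < N → j < N →
      (hs i).1 + s • eh i = (vs j).1 + t • ev j ∧
      (hs i).1 + s • eh i ∈ seg (hs i) ∧ (vs j).1 + t • ev j ∈ seg (vs j) ∧
      (vs j).1 + τ • ev j ∈ seg (vs j) ∧ (vs j).1 + τ • ev j ∈ seg (xs i j) ∧
      (hs i).1 + σ • eh i ∈ seg (hs i) ∧ (hs i).1 + σ • eh i ∈ seg (xs i j) := by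
    intro i j
    by_cases h : i < N ∧ j < N
    · obtain ⟨P, Ph, Pv⟩ := G.hv i h.1 j h.2
      obtain ⟨X, Xx, Xv⟩ := G.xv_self i h.1 j h.2
      obtain ⟨Y, Yx, Yh⟩ := G.xh_self i h.1 j h.2
      obtain ⟨s, es⟩ := exists_param Ph
      obtain ⟨t, et⟩ := exists_param Pv
      obtain ⟨τ, eτ⟩ := exists_param Xv
      obtain ⟨σ, eσ⟩ := exists_param Yh
      refine ⟨s, t, σ, τ, fun _ _ => ?_⟩
      simp only [eh, ev]
      rw [← es, ← et, ← eτ, ← eσ]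
      exact ⟨rfl, Ph, Pv, Xv, Xx, Yh, Yx⟩
    · exact ⟨0, 0, 0, 0, fun h1 h2 => absurd ⟨h1, h2⟩ h⟩
  choose s t σ τ hprop using hex
  obtain ⟨f₀, k₀, hf₀, hk₀, fN, kN, ⟨c1, c2, c3, c4, c5, c6, c7⟩, hc⟩ := hN fun i i' j j' =>
    (SignType.sign (s i j' - s i j), SignType.sign (t i' j - t i j),
      SignType.sign (cross (eh i) (ev j)), SignType.sign (τ i j - t i' j),
      SignType.sign (τ i' j - t i j), SignType.sign (σ i j - s i j'),
      SignType.sign (σ i j' - s i j))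
  simp only [Prod.mk.injEq] at hc
  let f : Fin 8 → ℕ := fun i => f₀ i.castSucc
  let k : Fin 8 → ℕ := fun j => k₀ j.castSucc
  have hf : StrictMono f := hf₀.comp (Fin.strictMono_castSucc)
  have hk : StrictMono k := hk₀.comp (Fin.strictMono_castSucc)
  have fN' : ∀ i, f i < N := fun i => fN _
  have kN' : ∀ j, k j < N := fun j => kN _
  have hcs : ∀ i : Fin 8, i.castSucc < Fin.last 8 := Fin.castSucc_lt_last
  have hP := fun i j => hprop (f i) (k j) (fN' i) (kN' j)
  obtain ⟨ε1, u1, E1⟩ := exists_unit_of_sign c1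
  obtain ⟨ε2, u2, E2⟩ := exists_unit_of_sign c2
  obtain ⟨ε3, u3, E3⟩ := exists_unit_of_sign c3
  obtain ⟨ε4, u4, E4⟩ := exists_unit_of_sign c4
  obtain ⟨ε5, u5, E5⟩ := exists_unit_of_sign c5
  obtain ⟨ε6, u6, E6⟩ := exists_unit_of_sign c6
  obtain ⟨ε7, u7, E7⟩ := exists_unit_of_sign c7
  have sne : ∀ i j j', j ≠ j' → s (f i) (k j') - s (f i) (k j) ≠ 0 := by
    intro i j j' hj h
    have a := hP i j
    have b := hP i j'
    rw [sub_eq_zero.1 h, a.1] at b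
    exact (G.vv _ (kN' j) _ (kN' j') (hk.injective.ne hj)).le_bot ⟨a.2.2.1, b.1 ▸ b.2.2.1⟩
  have tne : ∀ i i' j, i ≠ i' → t (f i') (k j) - t (f i) (k j) ≠ 0 := by
    intro i i' j hi h
    have a := hP i j
    have b := hP i' j
    rw [sub_eq_zero.1 h, ← a.1] at b
    exact (G.hh _ (fN' i) _ (fN' i') (hf.injective.ne hi)).le_bot ⟨a.2.1, b.1 ▸ b.2.1⟩
  have τne : ∀ i i' j, i ≠ i' → τ (f i) (k j) - t (f i') (k j) ≠ 0 := by
    intro i i' j hi h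
    have a := hP i j
    have b := hP i' j
    rw [sub_eq_zero.1 h, ← b.1] at a
    exact (G.xh _ (fN' i) _ (kN' j) _ (fN' i') (hf.injective.ne hi)).le_bot
      ⟨a.2.2.2.2.1, b.2.1⟩
  have σne : ∀ i j j', j ≠ j' → σ (f i) (k j) - s (f i) (k j') ≠ 0 := by
    intro i j j' hj h
    have a := hP i j
    have b := hP i j'
    rw [sub_eq_zero.1 h, b.1] at a
    exact (G.xv _ (fN' i) _ (kN' j) _ (kN' j') (hk.injective.ne hj)).le_bot
      ⟨a.2.2.2.2.2.2, b.2.2.1⟩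
  have c3ne : c3 ≠ 0 := by
    intro h0
    have par : ∀ i j, cross (eh (f i)) (ev (k j)) = 0 := fun i j =>
      sign_eq_zero_iff.1 ((hc _ _ (hcs i) _ _ (hcs j)).2.2.1.trans h0)
    have p00 := hP 0 0
    have p01 := hP 0 1
    have p10 := hP 1 0
    have p11 := hP 1 1
    have eh0 : eh (f 0) ≠ 0 := by
      intro h
      rw [h, smul_zero] at p00 p01
      exact (G.vv _ (kN' 0) _ (kN' 1) (hk.injective.ne (by decide))).le_bot
        ⟨p00.1 ▸ p00.2.2.1, p01.1 ▸ p01.2.2.1⟩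
    have ev0 : ev (k 0) ≠ 0 := by
      intro h
      rw [h, smul_zero] at p00 p10
      exact (G.hh _ (fN' 0) _ (fN' 1) (hf.injective.ne (by decide))).le_bot
        ⟨p00.1 ▸ p00.2.1, p10.1 ▸ p10.2.1⟩
    obtain ⟨m, hm⟩ := exists_smul_of_cross_eq_zero eh0 (par 0 0)
    obtain ⟨n, hn⟩ := exists_smul_of_cross_eq_zero ev0
      (w := eh (f 1)) (by have := par 1 0; unfold cross at this ⊢; linarith)
    -- all four crossings lie on the line of the row `f 0`
    have q10 : (hs (f 1)).1 + s (f 1) (k 0) • eh (f 1) = (hs (f 0)).1 +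
        (s (f 0) (k 0) + (t (f 1) (k 0) - t (f 0) (k 0)) * m) • eh (f 0) := by
      have e : (vs (k 0)).1 = (hs (f 0)).1 + s (f 0) (k 0) • eh (f 0) -
          t (f 0) (k 0) • ev (k 0) := by rw [p00.1]; module
      rw [p10.1, e, hm]; module
    have q11 : (hs (f 1)).1 + s (f 1) (k 1) • eh (f 1) = (hs (f 0)).1 +
        (s (f 0) (k 0) + (t (f 1) (k 0) - t (f 0) (k 0)) * m +
          (s (f 1) (k 1) - s (f 1) (k 0)) * (n * m)) • eh (f 0) := by
      have e : (hs (f 1)).1 + s (f 1) (k 1) • eh (f 1) = (hs (f 1)).1 + s (f 1) (k 0) • eh (f 1)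
          + (s (f 1) (k 1) - s (f 1) (k 0)) • eh (f 1) := by module
      rw [e, q10, hn, hm]; module
    refine false_of_collinear_cycle (convex_seg _) (convex_seg _) (convex_seg _) (convex_seg _)
      (G.hh _ (fN' 0) _ (fN' 1) (hf.injective.ne (by decide)))
      (G.vv _ (kN' 0) _ (kN' 1) (hk.injective.ne (by decide)))
      p00.2.1 (p00.1 ▸ p00.2.2.1) p01.2.1 (p01.1 ▸ p01.2.2.1) (q10 ▸ p10.2.1)
      ((q10.symm.trans p10.1) ▸ p10.2.2.1) (q11 ▸ p11.2.1)
      ((q11.symm.trans p11.1) ▸ p11.2.2.1)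
  have cne : ∀ i j, cross (eh (f i)) (ev (k j)) ≠ 0 := by
    intro i j h
    have := (hc _ _ (hcs i) _ _ (hcs j)).2.2.1
    simp only [f, k] at h
    rw [h, sign_zero] at this
    exact c3ne this.symm
  have q1 : ε1 * ε1 = 1 := by rcases u1 with rfl | rfl <;> norm_num
  have q2 : ε2 * ε2 = 1 := by rcases u2 with rfl | rfl <;> norm_num
  have sm : ∀ {ε : ℝ} (_ : ε * ε = 1) (r : ℝ) (w : Pt), (ε * r) • ε • w = r • w := by
    intro ε h r w
    rw [smul_smul, mul_right_comm, h, one_mul]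
  -- reversing all rows by `ε1` and all columns by `ε2` makes the parameters increasing
  refine ⟨{ V := fun j => seg (vs (k j))
            H := fun i => seg (hs (f i))
            x := fun i j => seg (xs (f i) (k j))
            convex_V := fun _ => convex_seg _
            convex_H := fun _ => convex_seg _
            convex_x := fun _ _ => convex_seg _
            disj_VV := fun j j' h => G.vv _ (kN' _) _ (kN' _) (hk.injective.ne h)
            disj_HH := fun j j' h => G.hh _ (fN' _) _ (fN' _) (hf.injective.ne h)
            disj_xx := fun i j i' j' h =>
              G.xx _ (fN' _) _ (kN' _) _ (fN' _) _ (kN' _) (hf.injective.ne h)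
            disj_xV := fun i j j' h => G.xv _ (fN' _) _ (kN' _) _ (kN' _) (hk.injective.ne h)
            disj_xH := fun i j i' h => G.xh _ (fN' _) _ (kN' _) _ (fN' _) (hf.injective.ne h)
            P := fun i j => (hs (f i)).1 + s (f i) (k j) • eh (f i)
            X := fun i j => (vs (k j)).1 + τ (f i) (k j) • ev (k j)
            Y := fun i j => (hs (f i)).1 + σ (f i) (k j) • eh (f i)
            P_mem_V := fun i j => (hP i j).1 ▸ (hP i j).2.2.1
            P_mem_H := fun i j => (hP i j).2.1
            X_mem_x := fun i j => (hP i j).2.2.2.2.1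
            X_mem_V := fun i j => (hP i j).2.2.2.1
            Y_mem_x := fun i j => (hP i j).2.2.2.2.2.2
            Y_mem_H := fun i j => (hP i j).2.2.2.2.2.1
            oh := fun i => (hs (f i)).1
            dh := fun i => ε1 • eh (f i)
            ov := fun j => (vs (k j)).1
            dv := fun j => ε2 • ev (k j)
            s := fun i j => ε1 * s (f i) (k j)
            t := fun i j => ε2 * t (f i) (k j)
            σ := fun i j => ε1 * σ (f i) (k j)
            τ := fun i j => ε2 * τ (f i) (k j)
            P_eq_h := fun i j => by rw [sm q1]
            P_eq_v := fun i j => by rw [sm q2, (hP i j).1]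
            X_eq := fun i j => by rw [sm q2]
            Y_eq := fun i j => by rw [sm q1]
            s_lt := fun i j j' h => by
              have := E1 _ (hc _ _ (hcs i) j.castSucc j'.castSucc h).1 (sne i j j' h.ne)
              linarith
            t_lt := fun i i' j h => by
              have := E2 _ (hc i.castSucc i'.castSucc h _ _ (hcs j)).2.1 (tne i i' j h.ne)
              linarith
            κ := ε1 * ε2 * ε3
            D_pos := fun i j => by
              have := E3 _ (hc _ _ (hcs i) _ _ (hcs j)).2.2.1 (cne i j)
              have e : ε1 * ε2 * ε3 * cross (ε1 • eh (f i)) (ε2 • ev (k j)) =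
                  (ε1 * ε1) * (ε2 * ε2) * (ε3 * cross (eh (f i)) (ev (k j))) := by
                simp only [cross, Prod.smul_fst, Prod.smul_snd, smul_eq_mul]; ring
              rw [e, q1, q2, one_mul, one_mul]
              exact this
            up := ?_
            down := ?_
            right := ?_
            left := ?_ }, f, k, hf, hk, fN', kN', rfl, rfl, rfl⟩
  · have h4 : ∀ i i' j, i < i' → 0 < ε4 * (τ (f i) (k j) - t (f i') (k j)) :=
      fun i i' j h => E4 _ (hc i.castSucc i'.castSucc h _ _ (hcs j)).2.2.2.1 (τne i i' j h.ne)
    rcases u2 with rfl | rfl <;> rcases u4 with rfl | rfl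
    · exact Or.inl fun i i' j h => by linarith [h4 i i' j h]
    · exact Or.inr fun i i' j h => by linarith [h4 i i' j h]
    · exact Or.inr fun i i' j h => by linarith [h4 i i' j h]
    · exact Or.inl fun i i' j h => by linarith [h4 i i' j h]
  · have h5 : ∀ i i' j, i < i' → 0 < ε5 * (τ (f i') (k j) - t (f i) (k j)) :=
      fun i i' j h => E5 _ (hc i.castSucc i'.castSucc h _ _ (hcs j)).2.2.2.2.1
        (τne i' i j h.ne')
    rcases u2 with rfl | rfl <;> rcases u5 with rfl | rfl
    · exact Or.inr fun i i' j h => by linarith [h5 i i' j h]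
    · exact Or.inl fun i i' j h => by linarith [h5 i i' j h]
    · exact Or.inl fun i i' j h => by linarith [h5 i i' j h]
    · exact Or.inr fun i i' j h => by linarith [h5 i i' j h]
  · have h6 : ∀ i j j', j < j' → 0 < ε6 * (σ (f i) (k j) - s (f i) (k j')) :=
      fun i j j' h => E6 _ (hc _ _ (hcs i) j.castSucc j'.castSucc h).2.2.2.2.2.1
        (σne i j j' h.ne)
    rcases u1 with rfl | rfl <;> rcases u6 with rfl | rfl
    · exact Or.inl fun i j j' h => by linarith [h6 i j j' h]
    · exact Or.inr fun i j j' h => by linarith [h6 i j j' h]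
    · exact Or.inr fun i j j' h => by linarith [h6 i j j' h]
    · exact Or.inl fun i j j' h => by linarith [h6 i j j' h]
  · have h7 : ∀ i j j', j < j' → 0 < ε7 * (σ (f i) (k j') - s (f i) (k j)) :=
      fun i j j' h => E7 _ (hc _ _ (hcs i) j.castSucc j'.castSucc h).2.2.2.2.2.2
        (σne i j' j h.ne')
    rcases u1 with rfl | rfl <;> rcases u7 with rfl | rfl
    · exact Or.inr fun i j j' h => by linarith [h7 i j j' h]
    · exact Or.inl fun i j j' h => by linarith [h7 i j j' h]
    · exact Or.inl fun i j j' h => by linarith [h7 i j j' h]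
    · exact Or.inr fun i j j' h => by
        have := h7 i j j' h
        linarith

/-! ### L-shaped curves -/

/-- The L-shaped curve coded by `(a, b, c, d)`: it has its corner at `(a, b)` and its free ends at
`(c + 1/2, b)` and `(a, d + 1/2)`. The shift by `1/2` keeps both arms nondegenerate, so that every
code gives a simple curve. -/
noncomputable def ell (q : ℕ × ℕ × ℕ × ℕ) (t : ℝ) : Pt :=
  if t ≤ 1 / 2 then
    (q.2.2.1 + 1 / 2 + 2 * t * (q.1 - (q.2.2.1 + 1 / 2)), q.2.1)
  else (q.1, q.2.1 + (2 * t - 1) * (q.2.2.2 + 1 / 2 - q.2.1))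

theorem natCast_ne_half (a b : ℕ) : (a : ℝ) - (b + 1 / 2) ≠ 0 := by
  intro h
  have h' : ((2 * a : ℕ) : ℝ) = ((2 * b + 1 : ℕ) : ℝ) := by push_cast; linarith
  have := Nat.cast_injective h'
  omega

theorem ell_isKBendCurve {k : ℕ} (hk : 1 ≤ k) (q : ℕ × ℕ × ℕ × ℕ) : IsKBendCurve k (ell q) := by
  obtain ⟨a, b, c, d⟩ := q
  have h1 := natCast_ne_half a c
  have h2 := natCast_ne_half b d
  refine ⟨?_, fun i => if i.val = 0 then 0 else if i.val = 1 then 1 / 2 else 1, by simp, ?_, ?_, ?_⟩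
  · intro x hx y hy hxy
    simp only [ell] at hxy
    split_ifs at hxy with ha hb hb <;> simp only [Prod.mk.injEq] at hxy
    · have := mul_right_cancel₀ h1 (add_left_cancel hxy.1)
      linarith
    · have h : (2 * y - 1) * ((b : ℝ) - (d + 1 / 2)) = 0 := by linarith [hxy.2]
      have := (mul_eq_zero.1 h).resolve_right h2
      linarith
    · have h : (2 * x - 1) * ((b : ℝ) - (d + 1 / 2)) = 0 := by linarith [hxy.2]
      have := (mul_eq_zero.1 h).resolve_right h2
      linarith
    · have h : (2 * x - (2 * y)) * ((b : ℝ) - (d + 1 / 2)) = 0 := by linarith [hxy.2]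
      have := (mul_eq_zero.1 h).resolve_right h2
      linarith
  · have e : (Fin.last (k + 1)).val = k + 1 := rfl
    simp only [e]
    rw [if_neg (by omega), if_neg (by omega)]
  · intro i j hij
    have hij' : i.val ≤ j.val := hij
    dsimp only
    split_ifs <;> first | omega | norm_num
  · intro i
    simp only [Fin.val_castSucc, Fin.val_succ, Nat.add_eq_zero_iff, one_ne_zero, and_false,
      if_false]
    rcases Nat.eq_zero_or_pos i.val with hi | hi
    · refine ⟨(c + 1 / 2, b), (2 * (a - (c + 1 / 2)), 0), Or.inr rfl, ?_⟩
      intro x hx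
      simp only [hi, if_true, zero_add] at hx
      simp only [ell, if_pos hx.2]
      ext <;> simp
      ring
    · refine ⟨(a, b - (d + 1 / 2 - b)), (0, 2 * (d + 1 / 2 - b)), Or.inl rfl, ?_⟩
      intro x hx
      have hx' : 1 / 2 ≤ x := by
        refine le_trans ?_ hx.1
        rw [if_neg (by omega)]
        split_ifs <;> norm_num
      simp only [ell]
      split_ifs with hle
      · obtain rfl : x = 1 / 2 := le_antisymm hle hx'
        ext <;> simp
      · ext <;> simp
        ring

theorem exists_param_between {c e x : ℝ} (hne : c - e ≠ 0) (h : (c ≤ x ∧ x ≤ e) ∨ (e ≤ x ∧ x ≤ c)) :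
    ∃ θ : ℝ, 0 ≤ θ ∧ θ ≤ 1 ∧ x = e + θ * (c - e) := by
  refine ⟨(x - e) / (c - e), ?_, ?_, by field_simp; ring⟩
  · rcases h with h | h
    · exact div_nonneg_of_nonpos (by linarith) (by linarith)
    · exact div_nonneg (by linarith) (by linarith)
  · rcases h with h | h
    · have : c - e < 0 := lt_of_le_of_ne (by linarith) hne
      rw [div_le_one_of_neg this]; linarith
    · have : 0 < c - e := lt_of_le_of_ne (by linarith) hne.symm
      rw [div_le_one this]; linarith

theorem between_of_param {c e θ : ℝ} (h0 : 0 ≤ θ) (h1 : θ ≤ 1) :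
    (c ≤ e + θ * (c - e) ∧ e + θ * (c - e) ≤ e) ∨ (e ≤ e + θ * (c - e) ∧ e + θ * (c - e) ≤ c) := by
  rcases le_total c e with h | h
  · left; constructor <;> nlinarith
  · right; constructor <;> nlinarith

/-- A point lies on the L-shape iff it lies on the horizontal or on the vertical arm. -/
theorem mem_Im_ell (a b c d : ℕ) (p : Pt) : p ∈ Im (ell (a, b, c, d)) ↔
    (p.2 = b ∧ ((a ≤ p.1 ∧ p.1 ≤ c + 1 / 2) ∨ (c + 1 / 2 ≤ p.1 ∧ p.1 ≤ a))) ∨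
    (p.1 = a ∧ ((b ≤ p.2 ∧ p.2 ≤ d + 1 / 2) ∨ (d + 1 / 2 ≤ p.2 ∧ p.2 ≤ b))) := by
  constructor
  · rintro ⟨t, ⟨h0, h1⟩, rfl⟩
    simp only [ell]
    split_ifs with h
    · exact Or.inl ⟨rfl, between_of_param (by linarith) (by linarith)⟩
    · refine Or.inr ⟨rfl, ?_⟩
      have := between_of_param (c := b) (e := d + 1 / 2) (θ := 1 - (2 * t - 1)) (by linarith)
        (by linarith)
      have e : (b : ℝ) + (2 * t - 1) * (d + 1 / 2 - b)
          = d + 1 / 2 + (1 - (2 * t - 1)) * (b - (d + 1 / 2)) := by ring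
      dsimp only
      rw [e]
      exact this
  · obtain ⟨x, y⟩ := p
    rintro (⟨rfl, h⟩ | ⟨rfl, h⟩)
    · obtain ⟨θ, h0, h1, e⟩ := exists_param_between (natCast_ne_half a c) h
      dsimp only at e
      refine ⟨θ / 2, ⟨by linarith, by linarith⟩, ?_⟩
      simp only [ell]
      rw [if_pos (by linarith)]
      ext
      · simp only [e]; ring
      · rfl
    · obtain ⟨θ, h0, h1, e⟩ := exists_param_between (natCast_ne_half b d) h
      dsimp only at e
      refine ⟨1 - θ / 2, ⟨by linarith, by linarith⟩, ?_⟩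
      simp only [ell]
      split_ifs with hle
      · obtain rfl : θ = 1 := by linarith
        ext
        · simp; ring
        · simp only [e]; ring
      · ext
        · rfl
        · simp only [e]; ring

/-- The L-shapes coded by `u` and `w` intersect. -/
def Meet (u w : ℕ × ℕ × ℕ × ℕ) : Prop := (Im (ell u) ∩ Im (ell w)).Nonempty

/-- The code of the column `j` of the grid; its horizontal arm is only `1/2` long. -/
def colL (N j : ℕ) : ℕ × ℕ × ℕ × ℕ := (4 * j + 4, 0, 4 * j + 4, 4 * N + 8)

/-- The code of the row `i` of the grid; its vertical arm is only `1/2` long. -/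
def rowL (N i : ℕ) : ℕ × ℕ × ℕ × ℕ := (0, 4 * i + 4, 4 * N + 8, 4 * i + 4)

/-- The code of the mark of the cell `(i, j)`: its horizontal arm crosses the column `j` just above
the row `i`, its vertical arm crosses the row `i` just left of the column `j`. -/
def markL (i j : ℕ) : ℕ × ℕ × ℕ × ℕ := (4 * j + 2, 4 * i + 6, 4 * j + 5, 4 * i + 2)

/-- The code of an L with its corner at the lower left near the cell `(d, a)`, touching the marks
of the cells `(c, a)` and `(d, b)` with its ends. -/
def lowL (a b c d : ℕ) : ℕ × ℕ × ℕ × ℕ := (4 * a + 3, 4 * d + 3, 4 * b + 2, 4 * c + 6)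

/-- The code of a 7-shaped curve with its corner at the upper right near the cell `(c, b)`,
touching the marks of the cells `(c, a)` and `(d, b)`. -/
def highL (a b c d : ℕ) : ℕ × ℕ × ℕ × ℕ := (4 * b + 5, 4 * c + 5, 4 * a + 1, 4 * d + 5)

theorem natCast_add_one_le {a b : ℕ} (h : a < b) : (a : ℝ) + 1 ≤ b := by exact_mod_cast h

theorem meet_row_col {N i j : ℕ} (hi : i < N) (hj : j < N) : Meet (rowL N i) (colL N j) := by
  have hi' := natCast_add_one_le hi
  have hj' := natCast_add_one_le hj
  have i0 : (0 : ℝ) ≤ i := i.cast_nonneg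
  have j0 : (0 : ℝ) ≤ j := j.cast_nonneg
  refine ⟨(4 * j + 4, 4 * i + 4), ?_, ?_⟩
  · rw [rowL, mem_Im_ell]; push_cast
    exact Or.inl ⟨rfl, Or.inl ⟨by linarith, by linarith⟩⟩
  · rw [colL, mem_Im_ell]; push_cast
    exact Or.inr ⟨rfl, Or.inl ⟨by linarith, by linarith⟩⟩

theorem meet_mark_col {N i j : ℕ} (hi : i < N) : Meet (markL i j) (colL N j) := by
  have hi' := natCast_add_one_le hi
  have i0 : (0 : ℝ) ≤ i := i.cast_nonneg
  refine ⟨(4 * j + 4, 4 * i + 6), ?_, ?_⟩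
  · rw [markL, mem_Im_ell]; push_cast
    exact Or.inl ⟨rfl, Or.inl ⟨by linarith, by linarith⟩⟩
  · rw [colL, mem_Im_ell]; push_cast
    exact Or.inr ⟨rfl, Or.inl ⟨by linarith, by linarith⟩⟩

theorem meet_mark_row {N i j : ℕ} (hj : j < N) : Meet (markL i j) (rowL N i) := by
  have hj' := natCast_add_one_le hj
  have j0 : (0 : ℝ) ≤ j := j.cast_nonneg
  refine ⟨(4 * j + 2, 4 * i + 4), ?_, ?_⟩
  · rw [markL, mem_Im_ell]; push_cast
    exact Or.inr ⟨rfl, Or.inr ⟨by linarith, by linarith⟩⟩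
  · rw [rowL, mem_Im_ell]; push_cast
    exact Or.inl ⟨rfl, Or.inl ⟨by linarith, by linarith⟩⟩

theorem meet_low_mark {a b c d : ℕ} (hab : a < b) (hdc : d < c) :
    Meet (lowL a b c d) (markL c a) ∧ Meet (lowL a b c d) (markL d b) := by
  have h1 := natCast_add_one_le hab
  have h2 := natCast_add_one_le hdc
  refine ⟨⟨(4 * a + 3, 4 * c + 6), ?_, ?_⟩, ⟨(4 * b + 2, 4 * d + 3), ?_, ?_⟩⟩
  · rw [lowL, mem_Im_ell]; push_cast
    exact Or.inr ⟨rfl, Or.inl ⟨by linarith, by linarith⟩⟩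
  · rw [markL, mem_Im_ell]; push_cast
    exact Or.inl ⟨rfl, Or.inl ⟨by linarith, by linarith⟩⟩
  · rw [lowL, mem_Im_ell]; push_cast
    exact Or.inl ⟨rfl, Or.inl ⟨by linarith, by linarith⟩⟩
  · rw [markL, mem_Im_ell]; push_cast
    exact Or.inr ⟨rfl, Or.inr ⟨by linarith, by linarith⟩⟩

theorem meet_high_mark {a b c d : ℕ} (hab : a < b) (hdc : d < c) :
    Meet (highL a b c d) (markL c a) ∧ Meet (highL a b c d) (markL d b) := by
  have h1 := natCast_add_one_le hab
  have h2 := natCast_add_one_le hdc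
  refine ⟨⟨(4 * a + 2, 4 * c + 5), ?_, ?_⟩, ⟨(4 * b + 5, 4 * d + 6), ?_, ?_⟩⟩
  · rw [highL, mem_Im_ell]; push_cast
    exact Or.inl ⟨rfl, Or.inr ⟨by linarith, by linarith⟩⟩
  · rw [markL, mem_Im_ell]; push_cast
    exact Or.inr ⟨rfl, Or.inr ⟨by linarith, by linarith⟩⟩
  · rw [highL, mem_Im_ell]; push_cast
    exact Or.inr ⟨rfl, Or.inr ⟨by linarith, by linarith⟩⟩
  · rw [markL, mem_Im_ell]; push_cast
    exact Or.inl ⟨rfl, Or.inl ⟨by linarith, by linarith⟩⟩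

theorem meet_low_high {a b c d a' b' c' d' : ℕ} (h1 : a ≤ b') (h2 : b' < b) (h3 : d' < d)
    (h4 : d ≤ c') : Meet (lowL a b c d) (highL a' b' c' d') := by
  have h1' : (a : ℝ) ≤ b' := by exact_mod_cast h1
  have h4' : (d : ℝ) ≤ c' := by exact_mod_cast h4
  have h2' := natCast_add_one_le h2
  have h3' := natCast_add_one_le h3
  refine ⟨(4 * b' + 5, 4 * d + 3), ?_, ?_⟩
  · rw [lowL, mem_Im_ell]; push_cast
    exact Or.inl ⟨rfl, Or.inl ⟨by linarith, by linarith⟩⟩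
  · rw [highL, mem_Im_ell]; push_cast
    exact Or.inr ⟨rfl, Or.inr ⟨by linarith, by linarith⟩⟩

theorem not_meet_col_col {N j j' : ℕ} (h : j ≠ j') : ¬ Meet (colL N j) (colL N j') := by
  rintro ⟨p, h1, h2⟩
  rw [colL, mem_Im_ell] at h1 h2
  push_cast at h1 h2
  have n0 : (0 : ℝ) ≤ N := N.cast_nonneg
  rcases h.lt_or_gt with h | h <;> replace h := natCast_add_one_le h <;>
  rcases h1 with ⟨_, ⟨_, _⟩ | ⟨_, _⟩⟩ | ⟨_, ⟨_, _⟩ | ⟨_, _⟩⟩ <;>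
  rcases h2 with ⟨_, ⟨_, _⟩ | ⟨_, _⟩⟩ | ⟨_, ⟨_, _⟩ | ⟨_, _⟩⟩ <;> linarith

theorem not_meet_row_row {N j j' : ℕ} (h : j ≠ j') : ¬ Meet (rowL N j) (rowL N j') := by
  rintro ⟨p, h1, h2⟩
  rw [rowL, mem_Im_ell] at h1 h2
  push_cast at h1 h2
  have n0 : (0 : ℝ) ≤ N := N.cast_nonneg
  rcases h.lt_or_gt with h | h <;> replace h := natCast_add_one_le h <;>
  rcases h1 with ⟨_, ⟨_, _⟩ | ⟨_, _⟩⟩ | ⟨_, ⟨_, _⟩ | ⟨_, _⟩⟩ <;>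
  rcases h2 with ⟨_, ⟨_, _⟩ | ⟨_, _⟩⟩ | ⟨_, ⟨_, _⟩ | ⟨_, _⟩⟩ <;> linarith

theorem not_meet_mark_mark {i j i' j' : ℕ} (h : i ≠ i') : ¬ Meet (markL i j) (markL i' j') := by
  rintro ⟨p, h1, h2⟩
  rw [markL, mem_Im_ell] at h1 h2
  push_cast at h1 h2
  rcases h.lt_or_gt with h | h <;> replace h := natCast_add_one_le h <;>
  rcases h1 with ⟨_, ⟨_, _⟩ | ⟨_, _⟩⟩ | ⟨_, ⟨_, _⟩ | ⟨_, _⟩⟩ <;>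
  rcases h2 with ⟨_, ⟨_, _⟩ | ⟨_, _⟩⟩ | ⟨_, ⟨_, _⟩ | ⟨_, _⟩⟩ <;> linarith

theorem not_meet_mark_col {N i j j' : ℕ} (h : j ≠ j') : ¬ Meet (markL i j) (colL N j') := by
  rintro ⟨p, h1, h2⟩
  rw [markL, mem_Im_ell] at h1
  rw [colL, mem_Im_ell] at h2
  push_cast at h1 h2
  have i0 : (0 : ℝ) ≤ i := i.cast_nonneg
  have n0 : (0 : ℝ) ≤ N := N.cast_nonneg
  rcases h.lt_or_gt with h | h <;> replace h := natCast_add_one_le h <;>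
  rcases h1 with ⟨_, ⟨_, _⟩ | ⟨_, _⟩⟩ | ⟨_, ⟨_, _⟩ | ⟨_, _⟩⟩ <;>
  rcases h2 with ⟨_, ⟨_, _⟩ | ⟨_, _⟩⟩ | ⟨_, ⟨_, _⟩ | ⟨_, _⟩⟩ <;> linarith

theorem not_meet_mark_row {N i j i' : ℕ} (h : i ≠ i') : ¬ Meet (markL i j) (rowL N i') := by
  rintro ⟨p, h1, h2⟩
  rw [markL, mem_Im_ell] at h1
  rw [rowL, mem_Im_ell] at h2
  push_cast at h1 h2
  have j0 : (0 : ℝ) ≤ j := j.cast_nonneg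
  have n0 : (0 : ℝ) ≤ N := N.cast_nonneg
  rcases h.lt_or_gt with h | h <;> replace h := natCast_add_one_le h <;>
  rcases h1 with ⟨_, ⟨_, _⟩ | ⟨_, _⟩⟩ | ⟨_, ⟨_, _⟩ | ⟨_, _⟩⟩ <;>
  rcases h2 with ⟨_, ⟨_, _⟩ | ⟨_, _⟩⟩ | ⟨_, ⟨_, _⟩ | ⟨_, _⟩⟩ <;> linarith

theorem not_meet_low_col {N a b c d j : ℕ} (hab : a < b) (hdc : d < c) (h : j < a ∨ b < j) :
    ¬ Meet (lowL a b c d) (colL N j) := by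
  rintro ⟨p, h1, h2⟩
  rw [lowL, mem_Im_ell] at h1
  rw [colL, mem_Im_ell] at h2
  push_cast at h1 h2
  have d0 : (0 : ℝ) ≤ d := d.cast_nonneg
  have n0 : (0 : ℝ) ≤ N := N.cast_nonneg
  have hab' := natCast_add_one_le hab
  have hdc' := natCast_add_one_le hdc
  rcases h with h | h <;> replace h := natCast_add_one_le h <;>
  rcases h1 with ⟨_, ⟨_, _⟩ | ⟨_, _⟩⟩ | ⟨_, ⟨_, _⟩ | ⟨_, _⟩⟩ <;>
  rcases h2 with ⟨_, ⟨_, _⟩ | ⟨_, _⟩⟩ | ⟨_, ⟨_, _⟩ | ⟨_, _⟩⟩ <;> linarith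

theorem not_meet_low_row {N a b c d i : ℕ} (hab : a < b) (hdc : d < c) (h : i < d ∨ c < i) :
    ¬ Meet (lowL a b c d) (rowL N i) := by
  rintro ⟨p, h1, h2⟩
  rw [lowL, mem_Im_ell] at h1
  rw [rowL, mem_Im_ell] at h2
  push_cast at h1 h2
  have a0 : (0 : ℝ) ≤ a := a.cast_nonneg
  have n0 : (0 : ℝ) ≤ N := N.cast_nonneg
  have hab' := natCast_add_one_le hab
  have hdc' := natCast_add_one_le hdc
  rcases h with h | h <;> replace h := natCast_add_one_le h <;>
  rcases h1 with ⟨_, ⟨_, _⟩ | ⟨_, _⟩⟩ | ⟨_, ⟨_, _⟩ | ⟨_, _⟩⟩ <;>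
  rcases h2 with ⟨_, ⟨_, _⟩ | ⟨_, _⟩⟩ | ⟨_, ⟨_, _⟩ | ⟨_, _⟩⟩ <;> linarith

theorem not_meet_high_col {N a b c d j : ℕ} (hab : a < b) (hdc : d < c) (h : j < a ∨ b < j) :
    ¬ Meet (highL a b c d) (colL N j) := by
  rintro ⟨p, h1, h2⟩
  rw [highL, mem_Im_ell] at h1
  rw [colL, mem_Im_ell] at h2
  push_cast at h1 h2
  have d0 : (0 : ℝ) ≤ d := d.cast_nonneg
  have n0 : (0 : ℝ) ≤ N := N.cast_nonneg
  have hab' := natCast_add_one_le hab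
  have hdc' := natCast_add_one_le hdc
  rcases h with h | h <;> replace h := natCast_add_one_le h <;>
  rcases h1 with ⟨_, ⟨_, _⟩ | ⟨_, _⟩⟩ | ⟨_, ⟨_, _⟩ | ⟨_, _⟩⟩ <;>
  rcases h2 with ⟨_, ⟨_, _⟩ | ⟨_, _⟩⟩ | ⟨_, ⟨_, _⟩ | ⟨_, _⟩⟩ <;> linarith

theorem not_meet_high_row {N a b c d i : ℕ} (hab : a < b) (hdc : d < c) (h : i < d ∨ c < i) :
    ¬ Meet (highL a b c d) (rowL N i) := by
  rintro ⟨p, h1, h2⟩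
  rw [highL, mem_Im_ell] at h1
  rw [rowL, mem_Im_ell] at h2
  push_cast at h1 h2
  have a0 : (0 : ℝ) ≤ a := a.cast_nonneg
  have n0 : (0 : ℝ) ≤ N := N.cast_nonneg
  have hab' := natCast_add_one_le hab
  have hdc' := natCast_add_one_le hdc
  rcases h with h | h <;> replace h := natCast_add_one_le h <;>
  rcases h1 with ⟨_, ⟨_, _⟩ | ⟨_, _⟩⟩ | ⟨_, ⟨_, _⟩ | ⟨_, _⟩⟩ <;>
  rcases h2 with ⟨_, ⟨_, _⟩ | ⟨_, _⟩⟩ | ⟨_, ⟨_, _⟩ | ⟨_, _⟩⟩ <;> linarith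

/-! ### The universal graph of L-shapes -/

/-- All four entries of the code are below `M`. -/
def Bdd (M : ℕ) (q : ℕ × ℕ × ℕ × ℕ) : Prop := q.1 < M ∧ q.2.1 < M ∧ q.2.2.1 < M ∧ q.2.2.2 < M

/-- For large `M`, the intersection graph of all L-shapes with code below `M` has no segment
representation. -/
theorem exists_not_segment : ∃ M : ℕ, ¬ ∃ S : ℕ × ℕ × ℕ × ℕ → Pt × Pt,
    ∀ u w, Bdd M u → Bdd M w → u ≠ w → ((seg (S u) ∩ seg (S w)).Nonempty ↔ Meet u w) := by
  obtain ⟨N, hN⟩ := exists_cleanGrid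
  refine ⟨4 * N + 9, ?_⟩
  rintro ⟨S, hS⟩
  have bcol : ∀ j < N, Bdd (4 * N + 9) (colL N j) := fun j hj => by
    simp only [Bdd, colL]; omega
  have brow : ∀ j < N, Bdd (4 * N + 9) (rowL N j) := fun j hj => by
    simp only [Bdd, rowL]; omega
  have bmark : ∀ i < N, ∀ j < N, Bdd (4 * N + 9) (markL i j) := fun i hi j hj => by
    simp only [Bdd, markL]; omega
  have blow : ∀ a < N, ∀ b < N, ∀ c < N, ∀ d < N, Bdd (4 * N + 9) (lowL a b c d) :=
    fun a ha b hb c hc d hd => by simp only [Bdd, lowL]; omega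
  have bhigh : ∀ a < N, ∀ b < N, ∀ c < N, ∀ d < N, Bdd (4 * N + 9) (highL a b c d) :=
    fun a ha b hb c hc d hd => by simp only [Bdd, highL]; omega
  have disj {u w} (hu : Bdd (4 * N + 9) u) (hw : Bdd (4 * N + 9) w) (hne : u ≠ w)
      (h : ¬ Meet u w) : Disjoint (seg (S u)) (seg (S w)) := by
    rw [Set.disjoint_iff_inter_eq_empty, ← Set.not_nonempty_iff_eq_empty]
    exact fun h' => h ((hS u w hu hw hne).1 h')
  have meet {u w} (hu : Bdd (4 * N + 9) u) (hw : Bdd (4 * N + 9) w) (hne : u ≠ w)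
      (h : Meet u w) : (seg (S u) ∩ seg (S w)).Nonempty := (hS u w hu hw hne).2 h
  have ne_mark_col {i j j'} : markL i j ≠ colL N j' := by
    intro h; simp only [markL, colL, Prod.mk.injEq] at h; omega
  have ne_mark_row {i j j'} : markL i j ≠ rowL N j' := by
    intro h; simp only [markL, rowL, Prod.mk.injEq] at h; omega
  have ne_low_col {a b c d j'} : lowL a b c d ≠ colL N j' := by
    intro h; simp only [lowL, colL, Prod.mk.injEq] at h; omega
  have ne_low_row {a b c d j'} : lowL a b c d ≠ rowL N j' := by
    intro h; simp only [lowL, rowL, Prod.mk.injEq] at h; omega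
  have ne_high_col {a b c d j'} : highL a b c d ≠ colL N j' := by
    intro h; simp only [highL, colL, Prod.mk.injEq] at h; omega
  have ne_high_row {a b c d j'} : highL a b c d ≠ rowL N j' := by
    intro h; simp only [highL, rowL, Prod.mk.injEq] at h; omega
  have ne_low_mark {a b c d i j} : lowL a b c d ≠ markL i j := by
    intro h; simp only [lowL, markL, Prod.mk.injEq] at h; omega
  have ne_high_mark {a b c d i j} : highL a b c d ≠ markL i j := by
    intro h; simp only [highL, markL, Prod.mk.injEq] at h; omega
  obtain ⟨g, f, k, hf, hk, fN, kN, eV, eH, ex⟩ := hN (fun j => S (colL N j))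
    (fun i => S (rowL N i)) (fun i j => S (markL i j))
    { vv := fun j hj j' hj' h => disj (bcol j hj) (bcol j' hj')
        (by intro h'; simp only [colL, Prod.mk.injEq] at h'; omega) (not_meet_col_col h)
      hh := fun j hj j' hj' h => disj (brow j hj) (brow j' hj')
        (by intro h'; simp only [rowL, Prod.mk.injEq] at h'; omega) (not_meet_row_row h)
      xx := fun i hi j hj i' hi' j' hj' h => disj (bmark i hi j hj) (bmark i' hi' j' hj')
        (by intro h'; simp only [markL, Prod.mk.injEq] at h'; omega) (not_meet_mark_mark h)
      xv := fun i hi j hj j' hj' h => disj (bmark i hi j hj) (bcol j' hj') ne_mark_col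
        (not_meet_mark_col h)
      xh := fun i hi j hj i' hi' h => disj (bmark i hi j hj) (brow i' hi') ne_mark_row
        (not_meet_mark_row h)
      hv := fun i hi j hj => meet (brow i hi) (bcol j hj)
        (by intro h'; simp only [rowL, colL, Prod.mk.injEq] at h'; omega) (meet_row_col hi hj)
      xv_self := fun i hi j hj => meet (bmark i hi j hj) (bcol j hj) ne_mark_col
        (meet_mark_col hi)
      xh_self := fun i hi j hj => meet (bmark i hi j hj) (brow i hi) ne_mark_row
        (meet_mark_row hj) }
  have hL := blow (k 3) (kN 3) (k 6) (kN 6) (f 6) (fN 6) (f 3) (fN 3)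
  have hH := bhigh (k 1) (kN 1) (k 4) (kN 4) (f 4) (fN 4) (f 1) (fN 1)
  have k36 : k 3 < k 6 := hk (by decide)
  have k14 : k 1 < k 4 := hk (by decide)
  have f36 : f 3 < f 6 := hf (by decide)
  have f14 : f 1 < f 4 := hf (by decide)
  have col_seg (p : Pt × Pt) : Collinear ℝ (seg p) := by
    rw [collinear_iff_exists_forall_eq_smul_vadd]
    refine ⟨p.1, p.2 - p.1, fun z hz => ?_⟩
    obtain ⟨θ, e⟩ := exists_param hz
    exact ⟨θ, by rw [e, vadd_eq_add, add_comm]⟩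
  refine g.false_of_L_seven (L := seg (S (lowL (k 3) (k 6) (f 6) (f 3))))
    (S := seg (S (highL (k 1) (k 4) (f 4) (f 1)))) (convex_seg _) (convex_seg _)
    (col_seg _) (col_seg _)
    (meet hL hH (by intro h'; simp only [lowL, highL, Prod.mk.injEq] at h'; omega)
      (meet_low_high (hk (by decide)).le (hk (by decide)) (hf (by decide)) (hf (by decide)).le))
    ?_ ?_ ?_ ?_ ?_ ?_ ?_ ?_ ?_ ?_ ?_ ?_ <;> simp only [eV, eH, ex]
  · exact meet hL (bmark _ (fN _) _ (kN _)) ne_low_mark (meet_low_mark k36 f36).1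
  · exact meet hL (bmark _ (fN _) _ (kN _)) ne_low_mark (meet_low_mark k36 f36).2
  · exact meet hH (bmark _ (fN _) _ (kN _)) ne_high_mark (meet_high_mark k14 f14).1
  · exact meet hH (bmark _ (fN _) _ (kN _)) ne_high_mark (meet_high_mark k14 f14).2
  · exact disj hL (bcol _ (kN _)) ne_low_col
      (not_meet_low_col k36 f36 (Or.inl (hk (by decide))))
  · exact disj hL (bcol _ (kN _)) ne_low_col
      (not_meet_low_col k36 f36 (Or.inr (hk (by decide))))
  · exact disj hL (brow _ (fN _)) ne_low_row
      (not_meet_low_row k36 f36 (Or.inl (hf (by decide))))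
  · exact disj hL (brow _ (fN _)) ne_low_row
      (not_meet_low_row k36 f36 (Or.inr (hf (by decide))))
  · exact disj hH (bcol _ (kN _)) ne_high_col
      (not_meet_high_col k14 f14 (Or.inl (hk (by decide))))
  · exact disj hH (bcol _ (kN _)) ne_high_col
      (not_meet_high_col k14 f14 (Or.inr (hk (by decide))))
  · exact disj hH (brow _ (fN _)) ne_high_row
      (not_meet_high_row k14 f14 (Or.inl (hf (by decide))))
  · exact disj hH (brow _ (fN _)) ne_high_row
      (not_meet_high_row k14 f14 (Or.inr (hf (by decide))))

/-- For every `k ≥ 1`, `B_k`-VPG is not contained in SEG: there is a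
graph with a `B_k`-VPG representation (indeed already a `B_1`-VPG representation) that
is not an intersection graph of straight line segments. -/
theorem Bk_VPG_not_subset_SEG (k : ℕ) (hk : 1 ≤ k) :
    ∃ (n : ℕ) (G : SimpleGraph (Fin n)), InBkVPG 1 G ∧ InBkVPG k G ∧ ¬ InSEG G := by
  classical
  obtain ⟨M, hM⟩ := exists_not_segment
  let W := Fin M × Fin M × Fin M × Fin M
  let e : W ≃ Fin (Fintype.card W) := Fintype.equivFin W
  let q : Fin (Fintype.card W) → ℕ × ℕ × ℕ × ℕ := fun a =>
    ((e.symm a).1, (e.symm a).2.1, (e.symm a).2.2.1, (e.symm a).2.2.2)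
  let G : SimpleGraph (Fin (Fintype.card W)) :=
    { Adj := fun a b => a ≠ b ∧ Meet (q a) (q b)
      symm := ⟨fun a b h => ⟨h.1.symm, by rw [Meet, Set.inter_comm]; exact h.2⟩⟩
      loopless := ⟨fun a h => h.1 rfl⟩ }
  have rep {m : ℕ} (hm : 1 ≤ m) : InBkVPG m G :=
    ⟨fun a => ell (q a), fun a => ell_isKBendCurve hm _,
      fun a b hab => ⟨fun h => ⟨hab, h⟩, fun h => h.2⟩⟩
  refine ⟨_, G, rep le_rfl, rep hk, ?_⟩
  rintro ⟨S, -, hS⟩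
  apply hM
  -- extend the segments to all quadruples; the value at unbounded ones is irrelevant
  let enc : ∀ u, Bdd M u → Fin (Fintype.card W) := fun u h =>
    e (⟨u.1, h.1⟩, ⟨u.2.1, h.2.1⟩, ⟨u.2.2.1, h.2.2.1⟩, ⟨u.2.2.2, h.2.2.2⟩)
  have qenc : ∀ u h, q (enc u h) = u := by
    intro u h
    simp only [q, enc, Equiv.symm_apply_apply]
  refine ⟨fun u => if h : Bdd M u then S (enc u h) else 0, fun u w hu hw huw => ?_⟩
  have hne : enc u hu ≠ enc w hw := fun h =>
    huw ((qenc u hu).symm.trans ((congrArg q h).trans (qenc w hw)))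
  have := hS _ _ hne
  simp only [dif_pos hu, dif_pos hw]
  rw [seg, seg, this]
  show (_ ∧ Meet (q _) (q _)) ↔ _
  rw [qenc u hu, qenc w hw]
  exact ⟨fun h => h.2, fun h => ⟨hne, h⟩⟩
end
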